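/- arXiv:0707.0425 — 2 statements merged into one kernel-verified Lean document; each statement's English description precedes it below -/
import Mathlib

section
/- Every continuous potential V on a compact domain D ⊆ ℂ of positive Lebesgue measure admits a unique equilibrium measure: a Borel probability measure μ₀ without point masses minimizing I_V(μ) = ∫V dμ + ∬_{z≠ζ} log|z−ζ|^{-1} dμ(ζ)dμ(z) over all Borel probability measures on D without atoms. -/
open MeasureTheory

/-- The (extended-real-valued) logarithmic energy `∬_{z≠ζ} log|z−ζ|⁻¹ dμ(ζ)dμ(z)` of a
measure on `ℂ`, defined as the difference of the lintegrals of the positive and negative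
parts of the kernel. -/
noncomputable def logEnergy (μ : Measure ℂ) : EReal :=
  ((∫⁻ p in {q : ℂ × ℂ | q.1 ≠ q.2},
      ENNReal.ofReal (Real.log ‖p.1 - p.2‖⁻¹) ∂(μ.prod μ)) : EReal) -
  ((∫⁻ p in {q : ℂ × ℂ | q.1 ≠ q.2},
      ENNReal.ofReal (-Real.log ‖p.1 - p.2‖⁻¹) ∂(μ.prod μ)) : EReal)

/-- The weighted logarithmic energy functional
`I_V(μ) = ∫ V dμ + ∬_{z≠ζ} log|z−ζ|⁻¹ dμ(ζ)dμ(z)`. -/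
noncomputable def weightedEnergy (V : ℂ → ℝ) (μ : Measure ℂ) : EReal :=
  ((∫ z, V z ∂μ : ℝ) : EReal) + logEnergy μ

/-!
Let `R ≥ 1` bound the diameter of `D`. The kernel `log⁺ (R / |x - y|)`, with value `⊤` on the
diagonal, is nonnegative and continuous into `[0, ∞]`, and on atomless probability measures on `D`
its energy is the logarithmic energy up to the constant `log R`. Hence the weighted energy is lower
semicontinuous on the weakly compact set of probability measures on `D`, where it attains its
minimum; the minimum is finite, and an atom would make it infinite.

Uniqueness is strict positive definiteness of the logarithm. By Frullani's integral
`2 log (R / r) = ∫₀^∞ (e^{-t r²} - e^{-t R²}) dt / t`, and `e^{-t |x - y|²}` is the characteristic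
function, at `x - y`, of a Gaussian `γ` of full support. Its energy form at `μ - ν` is therefore
`∫ |φ_μ - φ_ν|² dγ`, with `φ` denoting characteristic functions, and is positive for `μ ≠ ν`. So the
midpoint of two distinct minimizers would have strictly smaller energy.
-/

open Set Filter Topology ProbabilityTheory
open scoped ENNReal NNReal ComplexConjugate

section MutualEnergy

variable {X : Type*} [MeasurableSpace X]

/-- The mutual energy `∬ k(x, y) dμ(x) dν(y)` of two measures with respect to a nonnegative
kernel `k`; for `μ = ν` this is the energy of `μ`. -/
noncomputable def mutualEnergy (k : X × X → ℝ≥0∞) (μ ν : Measure X) : ℝ≥0∞ :=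
  ∫⁻ p, k p ∂(μ.prod ν)

/-- The kernel `U(x) + k(x, y)`, for which the energy of a probability measure `μ` is its
`k`-energy plus the potential energy `∫ U dμ` in the external field `U`. -/
def fieldKernel (U : X → ℝ≥0∞) (k : X × X → ℝ≥0∞) (p : X × X) : ℝ≥0∞ := U p.1 + k p

lemma isProbabilityMeasure_midpoint (μ ν : Measure X) [IsProbabilityMeasure μ]
    [IsProbabilityMeasure ν] : IsProbabilityMeasure ((2⁻¹ : ℝ≥0∞) • (μ + ν)) where
  measure_univ := by simp [ENNReal.inv_two_add_inv_two]

lemma mutualEnergy_fieldKernel {U : X → ℝ≥0∞} (hU : Measurable U) (k : X × X → ℝ≥0∞)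
    (μ ν : Measure X) [IsProbabilityMeasure ν] :
    mutualEnergy (fieldKernel U k) μ ν = ∫⁻ x, U x ∂μ + mutualEnergy k μ ν := by
  have hU_fst : ∫⁻ p, U p.1 ∂(μ.prod ν) = ∫⁻ x, U x ∂μ := by
    rw [← lintegral_map hU measurable_fst, Measure.map_fst_prod, measure_univ, one_smul]
  simp only [mutualEnergy, fieldKernel]
  rw [lintegral_add_left (by fun_prop), hU_fst]

lemma four_mul_mutualEnergy_midpoint (k : X × X → ℝ≥0∞) (μ ν : Measure X)
    [SFinite μ] [SFinite ν] :
    4 * mutualEnergy k ((2⁻¹ : ℝ≥0∞) • (μ + ν)) ((2⁻¹ : ℝ≥0∞) • (μ + ν)) =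
      mutualEnergy k μ μ + mutualEnergy k ν ν + (mutualEnergy k μ ν + mutualEnergy k ν μ) := by
  have h_four : (4 : ℝ≥0∞) * 2⁻¹ * 2⁻¹ = 1 := by
    rw [mul_assoc, ← ENNReal.mul_inv (by simp) (by simp), show (2 : ℝ≥0∞) * 2 = 4 by norm_num]
    exact ENNReal.mul_inv_cancel (by simp) (by simp)
  simp only [mutualEnergy, Measure.prod_smul_left, Measure.prod_smul_right, Measure.prod_add,
    Measure.add_prod, smul_add, smul_smul, lintegral_smul_measure, lintegral_add_measure,
    smul_eq_mul, mul_add, ← mul_assoc (4 : ℝ≥0∞), h_four, one_mul]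
  ring

lemma mutualEnergy_midpoint_lt {k : X × X → ℝ≥0∞} {μ ν : Measure X} [SFinite μ] [SFinite ν]
    (h_eq : mutualEnergy k ν ν = mutualEnergy k μ μ) (h_top : mutualEnergy k μ μ ≠ ⊤)
    (h_lt : mutualEnergy k μ ν + mutualEnergy k ν μ <
      mutualEnergy k μ μ + mutualEnergy k ν ν) :
    mutualEnergy k ((2⁻¹ : ℝ≥0∞) • (μ + ν)) ((2⁻¹ : ℝ≥0∞) • (μ + ν)) < mutualEnergy k μ μ := by
  rw [h_eq] at h_lt
  refine lt_of_mul_lt_mul_left' (a := 4) ?_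
  calc 4 * mutualEnergy k ((2⁻¹ : ℝ≥0∞) • (μ + ν)) ((2⁻¹ : ℝ≥0∞) • (μ + ν))
      = mutualEnergy k μ μ + mutualEnergy k μ μ +
          (mutualEnergy k μ ν + mutualEnergy k ν μ) := by
        rw [four_mul_mutualEnergy_midpoint, h_eq]
    _ < mutualEnergy k μ μ + mutualEnergy k μ μ +
          (mutualEnergy k μ μ + mutualEnergy k μ μ) :=
        ENNReal.add_lt_add_left (by finiteness) h_lt
    _ = 4 * mutualEnergy k μ μ := by ring

lemma mutualEnergy_fieldKernel_add_lt {U : X → ℝ≥0∞} (hU : Measurable U)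
    {k : X × X → ℝ≥0∞} {μ ν : Measure X} [IsProbabilityMeasure μ] [IsProbabilityMeasure ν]
    (hUμ : ∫⁻ x, U x ∂μ ≠ ⊤) (hUν : ∫⁻ x, U x ∂ν ≠ ⊤)
    (h_lt : mutualEnergy k μ ν + mutualEnergy k ν μ <
      mutualEnergy k μ μ + mutualEnergy k ν ν) :
    mutualEnergy (fieldKernel U k) μ ν + mutualEnergy (fieldKernel U k) ν μ <
      mutualEnergy (fieldKernel U k) μ μ + mutualEnergy (fieldKernel U k) ν ν := by
  simp only [mutualEnergy_fieldKernel hU]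
  rw [add_add_add_comm, add_add_add_comm (∫⁻ x, U x ∂μ) (mutualEnergy k μ μ)]
  exact ENNReal.add_lt_add_left (by finiteness) h_lt

end MutualEnergy

section Minimizers

variable {X : Type*} [TopologicalSpace X] [MeasurableSpace X]

lemma lowerSemicontinuous_lintegral_probabilityMeasure [OpensMeasurableSpace X]
    {f : X → ℝ≥0∞} (hf : Continuous f) :
    LowerSemicontinuous fun μ : ProbabilityMeasure X ↦ ∫⁻ x, f x ∂(μ : Measure X) := by
  have h_top (n : ℕ) (x : X) : min (f x) n ≠ ⊤ := ne_top_of_le_ne_top (by simp) (min_le_right _ _)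
  have h_le (n : ℕ) (x : X) : (min (f x) n).toReal ≤ n :=
    ENNReal.toReal_le_of_le_ofReal (by positivity) (by simp)
  let truncation (n : ℕ) : BoundedContinuousFunction X ℝ≥0 :=
    .mkOfBound ⟨fun x ↦ (min (f x) n).toNNReal, ENNReal.continuousOn_toNNReal.comp_continuous
        (hf.min continuous_const) (h_top n)⟩ n
      fun x y ↦ abs_sub_le_of_nonneg_of_le ENNReal.toReal_nonneg (h_le n x)
        ENNReal.toReal_nonneg (h_le n y)
  have h_truncation (n : ℕ) (x : X) : (truncation n x : ℝ≥0∞) = min (f x) n :=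
    ENNReal.coe_toNNReal (h_top n x)
  have h_iSup (μ : ProbabilityMeasure X) :
      ∫⁻ x, f x ∂(μ : Measure X) = ⨆ n, ∫⁻ x, truncation n x ∂(μ : Measure X) := by
    simp only [h_truncation]
    rw [← lintegral_iSup (fun n ↦ (hf.min continuous_const).measurable)
      fun m n hmn x ↦ min_le_min_left _ (by exact_mod_cast hmn)]
    refine lintegral_congr fun x ↦ ?_
    rw [← inf_iSup_eq, ENNReal.iSup_natCast, inf_top_eq]
  simp only [h_iSup]
  exact lowerSemicontinuous_iSup fun n ↦
    (ProbabilityMeasure.continuous_lintegral_boundedContinuousFunction _).lowerSemicontinuous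

lemma exists_forall_mutualEnergy_le [TopologicalSpace.MetrizableSpace X]
    [SecondCountableTopology X] [BorelSpace X]
    {k : X × X → ℝ≥0∞} (hk : Continuous k) {D : Set X} (hD : IsCompact D) (hD' : D.Nonempty) :
    ∃ μ : Measure X, IsProbabilityMeasure μ ∧ μ Dᶜ = 0 ∧
      ∀ ν : Measure X, IsProbabilityMeasure ν → ν Dᶜ = 0 →
        mutualEnergy k μ μ ≤ mutualEnergy k ν ν := by
  -- The constant quantifier puts `μ Dᶜ = 0` in the tightness form of Prokhorov's theorem below.
  let S : Set (ProbabilityMeasure X) := {μ | ∀ _ : ℕ, μ Dᶜ ≤ 0}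
  have mem_S {μ : ProbabilityMeasure X} : μ ∈ S ↔ (μ : Measure X) Dᶜ = 0 := by
    simp [S]
  have hS : IsCompact S := isCompact_setOfPred_probabilityMeasure_mass_eq_compl_isCompact_le
    (u := fun _ ↦ 0) (K := fun _ ↦ D) tendsto_const_nhds (fun _ ↦ hD) (Or.inl inferInstance)
  have hS' : S.Nonempty := by
    obtain ⟨x, hx⟩ := hD'
    exact ⟨⟨.dirac x, inferInstance⟩, mem_S.2 (by simp [hD.measurableSet.compl, hx])⟩
  have h_lsc : LowerSemicontinuous fun μ : ProbabilityMeasure X ↦ mutualEnergy k μ μ :=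
    (lowerSemicontinuous_lintegral_probabilityMeasure hk).comp
      (ProbabilityMeasure.continuous_prod.comp (continuous_id.prodMk continuous_id))
  obtain ⟨μ, hμ, hμ_min⟩ := (h_lsc.lowerSemicontinuousOn S).exists_isMinOn hS' hS
  exact ⟨μ, inferInstance, mem_S.1 hμ,
    fun ν hν hνD ↦ hμ_min (a := ⟨ν, hν⟩) (mem_S.2 hνD)⟩

end Minimizers

section LogKernel

/-- The logarithmic kernel `log⁺ (R / d(x, y))` at scale `R`, equal to `⊤` on the diagonal (for
`0 < R`), which makes it continuous as an extended-valued function. At distances at most `R` it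
is `-log d(x, y)` up to the additive constant `log R`. -/
noncomputable def logKernel {X : Type*} [PseudoEMetricSpace X] (R : ℝ≥0) (p : X × X) : ℝ≥0∞ :=
  (ENNReal.log (R / edist p.1 p.2)).toENNReal

lemma continuous_logKernel {X : Type*} [PseudoEMetricSpace X] {R : ℝ≥0} :
    Continuous (logKernel (X := X) R) :=
  (ENNReal.continuous_log.comp ((ENNReal.continuous_const_mul (by simp)).comp
    continuous_edist.inv)).ereal_toENNReal

lemma logKernel_self {X : Type*} [PseudoEMetricSpace X] {R : ℝ≥0} (hR : 0 < R) (x : X) :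
    logKernel R (x, x) = ⊤ := by
  simp [logKernel, ENNReal.div_zero, hR.ne']

lemma logKernel_of_ne {X : Type*} [MetricSpace X] {R : ℝ≥0} (hR : 0 < R) {p : X × X}
    (hp : p.1 ≠ p.2) : logKernel R p = ENNReal.ofReal (Real.log (R / dist p.1 p.2)) := by
  have hp : 0 < dist p.1 p.2 := dist_pos.2 hp
  rw [logKernel, edist_dist, ← ENNReal.ofReal_coe_nnreal, ← ENNReal.ofReal_div_of_pos hp,
    ENNReal.log_ofReal_of_pos (by positivity)]
  simp [EReal.toENNReal_of_ne_top]

lemma nullSingletonClass_of_mutualEnergy_logKernel_ne_top {X : Type*} [PseudoEMetricSpace X]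
    [MeasurableSpace X] [MeasurableSingletonClass X] {R : ℝ≥0} (hR : 0 < R) {μ : Measure X}
    [SFinite μ] (hμ : mutualEnergy (logKernel R) μ μ ≠ ⊤) : NullSingletonClass μ where
  measure_singleton x := by
    by_contra hx
    refine hμ (top_unique ?_)
    calc ⊤ = ∫⁻ p in {(x, x)}, logKernel R p ∂(μ.prod μ) := by
          rw [lintegral_singleton, logKernel_self hR, ← singleton_prod_singleton,
            Measure.prod_prod, ENNReal.top_mul (by simp [hx])]
      _ ≤ mutualEnergy (logKernel R) μ μ := setLIntegral_le_lintegral _ _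

lemma ae_prod_ne {X : Type*} [MeasurableSpace X] [MeasurableEq X] (μ ν : Measure X) [SFinite ν]
    [NullSingletonClass ν] : ∀ᵐ p ∂(μ.prod ν), p.1 ≠ p.2 := by
  rw [ae_iff]
  simp only [not_not]
  rw [Measure.measure_prod_null (measurableSet_eq_fun measurable_fst measurable_snd)]
  refine .of_forall fun x ↦ ?_
  have h_slice : Prod.mk x ⁻¹' {p : X × X | p.1 = p.2} = {x} := by
    ext y
    simp [eq_comm]
  simp [h_slice]

lemma ae_prod_edist_le {X : Type*} [PseudoEMetricSpace X] [MeasurableSpace X] {D : Set X}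
    {R : ℝ≥0∞} (hDR : Metric.ediam D ≤ R) {μ ν : Measure X} (hμ : μ Dᶜ = 0)
    (hν : ν Dᶜ = 0) : ∀ᵐ p ∂(μ.prod ν), edist p.1 p.2 ≤ R := by
  filter_upwards [Measure.quasiMeasurePreserving_fst.ae (show ∀ᵐ x ∂μ, x ∈ D from hμ),
    Measure.quasiMeasurePreserving_snd.ae (show ∀ᵐ y ∂ν, y ∈ D from hν)] with p hp₁ hp₂
  exact (Metric.edist_le_ediam_of_mem hp₁ hp₂).trans hDR

end LogKernel

section Frullani

lemma lintegral_exp_neg_sub_exp_neg_div {a b : ℝ} (ha : 0 < a) (hab : a ≤ b) :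
    ∫⁻ t in Ioi 0, ENNReal.ofReal ((Real.exp (-(a * t)) - Real.exp (-(b * t))) / t) =
      ENNReal.ofReal (Real.log (b / a)) := by
  let g (t : ℝ) : ℝ := t⁻¹ • (Real.exp (-(a * t)) - Real.exp (-(b * t)))
  have h_nonneg : ∀ t ∈ Ioi 0, 0 ≤ g t := fun t (ht : 0 < t) ↦
    smul_nonneg (by positivity) (sub_nonneg.2 (by gcongr))
  have h_le : ∀ t ∈ Ioi 0, g t ≤ (b - a) * Real.exp (-a * t) := fun t (ht : 0 < t) ↦ by
    have h_tangent : 1 - (b - a) * t ≤ Real.exp (-((b - a) * t)) := Real.one_sub_le_exp_neg _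
    calc g t = t⁻¹ * (Real.exp (-a * t) * (1 - Real.exp (-((b - a) * t)))) := by
          rw [mul_sub, ← Real.exp_add]
          simp only [g, smul_eq_mul]
          ring_nf
      _ ≤ t⁻¹ * (Real.exp (-a * t) * ((b - a) * t)) := by gcongr; linarith
      _ = (b - a) * Real.exp (-a * t) := by field
  have h_int : IntegrableOn g (Ioi 0) := by
    refine ((exp_neg_integrableOn_Ioi 0 ha).const_mul (b - a)).mono'
      (Measurable.aestronglyMeasurable (by fun_prop)) ?_
    filter_upwards [ae_restrict_mem measurableSet_Ioi] with t ht
    rw [Real.norm_of_nonneg (h_nonneg t ht)]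
    exact h_le t ht
  have h_cont : Continuous fun t : ℝ ↦ Real.exp (-t) := by fun_prop
  have h_zero : Tendsto (fun t : ℝ ↦ Real.exp (-t)) (𝓝[>] 0) (𝓝 1) := by
    simpa using (h_cont.tendsto 0).mono_left nhdsWithin_le_nhds
  have h_frullani : ∫ t in Ioi 0, g t = Real.log (b / a) := by
    simpa [g] using Frullani.integral_Ioi_eq (h_cont.locallyIntegrable.locallyIntegrableOn _) ha
      (ha.trans_le hab) h_zero Real.tendsto_exp_neg_atTop_nhds_zero h_int
  rw [← h_frullani, ofReal_integral_eq_lintegral_ofReal h_int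
    ((ae_restrict_mem measurableSet_Ioi).mono h_nonneg)]
  simp only [g, smul_eq_mul, inv_mul_eq_div]

end Frullani

section CharFun

variable {E : Type*} [NormedAddCommGroup E] [InnerProductSpace ℝ E] [MeasurableSpace E]
  [BorelSpace E] [SecondCountableTopology E]

lemma integrable_charFun_mul_conj_charFun (γ μ ν : Measure E) [IsFiniteMeasure γ]
    [IsFiniteMeasure μ] [IsFiniteMeasure ν] :
    Integrable (fun v ↦ charFun μ v * conj (charFun ν v)) γ := by
  have : Continuous (charFun μ) := continuous_charFun
  have : Continuous (charFun ν) := continuous_charFun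
  refine .of_bound (by fun_prop) (μ.real univ * ν.real univ) (.of_forall fun v ↦ ?_)
  rw [norm_mul, RCLike.norm_conj]
  gcongr <;> exact norm_charFun_le v

lemma integral_charFun_sub (γ μ ν : Measure E) [IsFiniteMeasure γ] [IsFiniteMeasure μ]
    [IsFiniteMeasure ν] :
    ∫ p, charFun γ (p.1 - p.2) ∂(μ.prod ν) = ∫ v, charFun μ v * conj (charFun ν v) ∂γ := by
  simp only [charFun_apply (μ := γ)]
  rw [integral_integral_swap]
  · congr with v
    rw [← charFun_neg, charFun_apply, charFun_apply, ← integral_prod_mul]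
    congr with p
    rw [← Complex.exp_add, real_inner_comm, inner_sub_left, inner_neg_right]
    push_cast
    ring_nf
  · refine .of_bound (Continuous.aestronglyMeasurable (by fun_prop)) 1 (.of_forall fun q ↦ ?_)
    exact (Complex.norm_exp_ofReal_mul_I _).le

lemma integral_charFun_sub_add_sub_add (γ μ ν : Measure E) [IsFiniteMeasure γ]
    [IsFiniteMeasure μ] [IsFiniteMeasure ν] :
    ∫ p, charFun γ (p.1 - p.2) ∂(μ.prod μ) + ∫ p, charFun γ (p.1 - p.2) ∂(ν.prod ν) -
      (∫ p, charFun γ (p.1 - p.2) ∂(μ.prod ν) + ∫ p, charFun γ (p.1 - p.2) ∂(ν.prod μ)) =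
    ∫ v, ‖charFun μ v - charFun ν v‖ ^ 2 ∂γ := by
  have h_int (α β : Measure E) [IsFiniteMeasure α] [IsFiniteMeasure β] :=
    integrable_charFun_mul_conj_charFun γ α β
  simp only [integral_charFun_sub]
  rw [← integral_add (h_int μ μ) (h_int ν ν), ← integral_add (h_int μ ν) (h_int ν μ),
    ← integral_sub (by fun_prop) (by fun_prop), ← integral_complex_ofReal]
  refine integral_congr_ae (.of_forall fun v ↦ ?_)
  simp only [Complex.ofReal_pow, ← Complex.mul_conj', map_sub]
  ring

lemma integral_norm_charFun_sub_sq_pos [CompleteSpace E] (γ : Measure E) [IsFiniteMeasure γ]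
    [γ.IsOpenPosMeasure] {μ ν : Measure E} [IsFiniteMeasure μ] [IsFiniteMeasure ν]
    (hμν : μ ≠ ν) : 0 < ∫ v, ‖charFun μ v - charFun ν v‖ ^ 2 ∂γ := by
  have : Continuous (charFun μ) := continuous_charFun
  have : Continuous (charFun ν) := continuous_charFun
  obtain ⟨v, hv⟩ : ∃ v, charFun μ v ≠ charFun ν v := by
    by_contra! h
    exact hμν (Measure.ext_of_charFun (funext h))
  refine integral_pos_of_integrable_nonneg_nonzero (by fun_prop) ?_ (fun _ ↦ by positivity)
    (pow_ne_zero 2 (norm_ne_zero_iff.2 (sub_ne_zero.2 hv)))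
  refine .of_bound (by fun_prop) ((μ.real univ + ν.real univ) ^ 2) (.of_forall fun v ↦ ?_)
  rw [Real.norm_of_nonneg (by positivity)]
  gcongr
  exact (norm_sub_le _ _).trans (add_le_add (norm_charFun_le v) (norm_charFun_le v))

end CharFun

section Gaussian

variable {E : Type*} [NormedAddCommGroup E] [InnerProductSpace ℝ E] [FiniteDimensional ℝ E]
  [MeasurableSpace E] [BorelSpace E]

lemma isOpenPosMeasure_stdGaussian : (stdGaussian E).IsOpenPosMeasure := by
  have : (gaussianReal 0 1).IsOpenPosMeasure :=
    (gaussianReal_absolutelyContinuous' 0 one_ne_zero).isOpenPosMeasure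
  exact Continuous.isOpenPosMeasure_map (by fun_prop) fun y ↦
    ⟨(stdOrthonormalBasis ℝ E).repr y, (stdOrthonormalBasis ℝ E).sum_repr y⟩

lemma exists_charFun_eq_exp_neg_norm_sq_mul {t : ℝ} (ht : 0 < t) :
    ∃ γ : Measure E, IsFiniteMeasure γ ∧ γ.IsOpenPosMeasure ∧
      ∀ x, charFun γ x = Real.exp (-(‖x‖ ^ 2 * t)) := by
  have := isOpenPosMeasure_stdGaussian (E := E)
  have h_sqrt : √(2 * t) ≠ 0 := by positivity
  refine ⟨(stdGaussian E).map (√(2 * t) • ·), inferInstance,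
    Continuous.isOpenPosMeasure_map (by fun_prop) (MulAction.surjective₀ h_sqrt), fun x ↦ ?_⟩
  rw [charFun_map_smul, charFun_stdGaussian, norm_smul, ← Complex.ofReal_pow, mul_pow,
    Real.norm_eq_abs, sq_abs, Real.sq_sqrt (by positivity)]
  push_cast
  ring_nf

lemma integral_exp_neg_dist_sq_mul_add_lt {t : ℝ} (ht : 0 < t) {μ ν : Measure E}
    [IsFiniteMeasure μ] [IsFiniteMeasure ν] (hμν : μ ≠ ν) :
    ∫ p, Real.exp (-(dist p.1 p.2 ^ 2 * t)) ∂(μ.prod ν) +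
      ∫ p, Real.exp (-(dist p.1 p.2 ^ 2 * t)) ∂(ν.prod μ) <
    ∫ p, Real.exp (-(dist p.1 p.2 ^ 2 * t)) ∂(μ.prod μ) +
      ∫ p, Real.exp (-(dist p.1 p.2 ^ 2 * t)) ∂(ν.prod ν) := by
  obtain ⟨γ, _, _, hγ⟩ := exists_charFun_eq_exp_neg_norm_sq_mul (E := E) ht
  have h_eq := integral_charFun_sub_add_sub_add γ μ ν
  simp only [hγ, integral_complex_ofReal, ← dist_eq_norm_sub] at h_eq
  norm_cast at h_eq
  rw [← sub_pos, h_eq]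
  simpa only [dist_eq_norm_sub] using integral_norm_charFun_sub_sq_pos γ hμν

end Gaussian

section StrictPositivity

/-- The nonnegative part of `(e^{-t d(x, y)²} - e^{-t R²}) / t`. On a set of diameter at most `R`,
twice the logarithmic kernel is the superposition of these kernels over `t > 0`. -/
noncomputable def gaussianGapKernel {X : Type*} [PseudoMetricSpace X] (R : ℝ≥0) (t : ℝ)
    (p : X × X) : ℝ≥0∞ :=
  .ofReal ((Real.exp (-(dist p.1 p.2 ^ 2 * t)) - Real.exp (-(R ^ 2 * t))) / t)

lemma two_mul_logKernel {X : Type*} [MetricSpace X] {R : ℝ≥0} {p : X × X} (hp : p.1 ≠ p.2)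
    (hpR : edist p.1 p.2 ≤ R) :
    2 * logKernel R p = ∫⁻ t in Ioi 0, gaussianGapKernel R t p := by
  have h_pos : 0 < dist p.1 p.2 := dist_pos.2 hp
  have h_le : dist p.1 p.2 ≤ R := by rwa [edist_le_coe, ← NNReal.coe_le_coe, coe_nndist] at hpR
  simp only [gaussianGapKernel]
  rw [lintegral_exp_neg_sub_exp_neg_div (by positivity) (by gcongr), ← div_pow, Real.log_pow,
    ENNReal.ofReal_mul (by positivity), logKernel_of_ne (by exact_mod_cast h_pos.trans_le h_le) hp]
  simp

variable {X : Type*} [MetricSpace X] [MeasurableSpace X] [BorelSpace X]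
  [SecondCountableTopology X] {D : Set X} {R : ℝ≥0}

lemma two_mul_mutualEnergy_logKernel (hDR : Metric.ediam D ≤ R) {μ ν : Measure X} [SFinite μ]
    [SFinite ν] [NullSingletonClass ν] (hμD : μ Dᶜ = 0) (hνD : ν Dᶜ = 0) :
    2 * mutualEnergy (logKernel R) μ ν =
      ∫⁻ t in Ioi 0, mutualEnergy (gaussianGapKernel R t) μ ν := by
  have h_superposition : ∀ᵐ p ∂(μ.prod ν),
      2 * logKernel R p = ∫⁻ t in Ioi 0, gaussianGapKernel R t p := by
    filter_upwards [ae_prod_ne μ ν, ae_prod_edist_le hDR hμD hνD] with p hp hpR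
    exact two_mul_logKernel hp hpR
  simp only [mutualEnergy]
  rw [← lintegral_const_mul _ continuous_logKernel.measurable, lintegral_congr_ae h_superposition,
    lintegral_lintegral_swap]
  simp only [gaussianGapKernel, Function.uncurry_def]
  fun_prop

lemma measurable_mutualEnergy_gaussianGapKernel (μ ν : Measure X) [SFinite μ] [SFinite ν] :
    Measurable fun t ↦ mutualEnergy (gaussianGapKernel R t) μ ν := by
  simp only [mutualEnergy, gaussianGapKernel]
  refine Measurable.lintegral_prod_right ?_
  simp only [Function.uncurry_def]
  fun_prop

lemma mutualEnergy_gaussianGapKernel_add (hDR : Metric.ediam D ≤ R) {t : ℝ} (ht : 0 < t)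
    {μ ν : Measure X} [IsProbabilityMeasure μ] [IsProbabilityMeasure ν] (hμD : μ Dᶜ = 0)
    (hνD : ν Dᶜ = 0) :
    mutualEnergy (gaussianGapKernel R t) μ ν + .ofReal (Real.exp (-(R ^ 2 * t)) / t) =
      .ofReal ((∫ p, Real.exp (-(dist p.1 p.2 ^ 2 * t)) ∂(μ.prod ν)) / t) := by
  have h_int : Integrable (fun p ↦ Real.exp (-(dist p.1 p.2 ^ 2 * t))) (μ.prod ν) := by
    refine .of_bound (Continuous.aestronglyMeasurable (by fun_prop)) 1 (.of_forall fun p ↦ ?_)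
    rw [Real.norm_of_nonneg (by positivity), Real.exp_le_one_iff, neg_nonpos]
    positivity
  have h_gap : ∀ᵐ p ∂(μ.prod ν), gaussianGapKernel R t p + .ofReal (Real.exp (-(R ^ 2 * t)) / t) =
      .ofReal (Real.exp (-(dist p.1 p.2 ^ 2 * t)) / t) := by
    filter_upwards [ae_prod_edist_le hDR hμD hνD] with p hp
    have hp : dist p.1 p.2 ≤ R := by rwa [edist_le_coe, ← NNReal.coe_le_coe, coe_nndist] at hp
    have h_exp : Real.exp (-(R ^ 2 * t)) ≤ Real.exp (-(dist p.1 p.2 ^ 2 * t)) := by gcongr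
    rw [gaussianGapKernel, ← ENNReal.ofReal_add (div_nonneg (sub_nonneg.2 h_exp) ht.le)
      (by positivity), ← add_div, sub_add_cancel]
  rw [← integral_div, ofReal_integral_eq_lintegral_ofReal (h_int.div_const t)
    (.of_forall fun p ↦ by positivity), ← lintegral_congr_ae h_gap,
    lintegral_add_right _ measurable_const]
  simp [mutualEnergy]

variable {E : Type*} [NormedAddCommGroup E] [InnerProductSpace ℝ E] [FiniteDimensional ℝ E]
  [MeasurableSpace E] [BorelSpace E]

lemma mutualEnergy_gaussianGapKernel_add_lt {D : Set E} (hDR : Metric.ediam D ≤ R) {t : ℝ}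
    (ht : 0 < t) {μ ν : Measure E} [IsProbabilityMeasure μ] [IsProbabilityMeasure ν]
    (hμD : μ Dᶜ = 0) (hνD : ν Dᶜ = 0) (hμν : μ ≠ ν) :
    mutualEnergy (gaussianGapKernel R t) μ ν + mutualEnergy (gaussianGapKernel R t) ν μ <
      mutualEnergy (gaussianGapKernel R t) μ μ + mutualEnergy (gaussianGapKernel R t) ν ν := by
  refine lt_of_add_lt_add_right (a := 2 * .ofReal (Real.exp (-(R ^ 2 * t)) / t)) ?_
  simp only [two_mul, add_add_add_comm _ _ (ENNReal.ofReal _) (ENNReal.ofReal _),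
    mutualEnergy_gaussianGapKernel_add hDR ht, hμD, hνD]
  rw [← ENNReal.ofReal_add (by positivity) (by positivity),
    ← ENNReal.ofReal_add (by positivity) (by positivity),
    ENNReal.ofReal_lt_ofReal_iff_of_nonneg (by positivity), ← add_div, ← add_div]
  gcongr ?_ / t
  exact integral_exp_neg_dist_sq_mul_add_lt ht hμν

theorem mutualEnergy_logKernel_add_lt (hR : 0 < R) {D : Set E} (hDR : Metric.ediam D ≤ R)
    {μ ν : Measure E} [IsProbabilityMeasure μ] [IsProbabilityMeasure ν] (hμD : μ Dᶜ = 0)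
    (hνD : ν Dᶜ = 0) (hμ : mutualEnergy (logKernel R) μ μ ≠ ⊤)
    (hν : mutualEnergy (logKernel R) ν ν ≠ ⊤) (hμν : μ ≠ ν) :
    mutualEnergy (logKernel R) μ ν + mutualEnergy (logKernel R) ν μ <
      mutualEnergy (logKernel R) μ μ + mutualEnergy (logKernel R) ν ν := by
  have := nullSingletonClass_of_mutualEnergy_logKernel_ne_top hR hμ
  have := nullSingletonClass_of_mutualEnergy_logKernel_ne_top hR hν
  have h_meas (α β : Measure E) [SFinite α] [SFinite β] :=
    measurable_mutualEnergy_gaussianGapKernel (R := R) α β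
  have h_lt {t : ℝ} (ht : t ∈ Ioi 0) := mutualEnergy_gaussianGapKernel_add_lt hDR ht hμD hνD hμν
  have h_top : 2 * (mutualEnergy (logKernel R) μ μ + mutualEnergy (logKernel R) ν ν) ≠ ⊤ := by
    finiteness
  refine lt_of_mul_lt_mul_left' (a := 2) ?_
  simp only [mul_add, two_mul_mutualEnergy_logKernel hDR, hμD, hνD] at h_top ⊢
  rw [← lintegral_add_left (h_meas μ ν), ← lintegral_add_left (h_meas μ μ)]
  rw [← lintegral_add_left (h_meas μ μ)] at h_top
  refine lintegral_strict_mono (by simp) ((h_meas μ μ).add (h_meas ν ν)).aemeasurable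
    (ne_top_of_le_ne_top h_top ?_) ?_
  · exact setLIntegral_mono' measurableSet_Ioi fun t ht ↦ (h_lt ht).le
  · exact (ae_restrict_mem measurableSet_Ioi).mono fun t ht ↦ h_lt ht

end StrictPositivity

section FiniteEnergy

variable {E : Type*} [NormedAddCommGroup E] [MeasurableSpace E] [BorelSpace E]

lemma lintegral_logKernel_left_eq (μ : Measure E) [μ.IsAddRightInvariant] (R : ℝ≥0) (y : E) :
    ∫⁻ x, logKernel R (x, y) ∂μ = ∫⁻ x, logKernel R (x, 0) ∂μ := by
  have h_translate (x : E) : logKernel R (x, y) = logKernel R (x - y, 0) := by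
    simp only [logKernel, edist_eq_enorm_sub, sub_zero]
  simp only [h_translate]
  exact lintegral_sub_right_eq_self (fun x ↦ logKernel R (x, 0)) y

variable [NormedSpace ℝ E] [FiniteDimensional ℝ E] [Nontrivial E] {R : ℝ≥0}

lemma lintegral_logKernel_zero_ne_top (hR : 0 < R) (μ : Measure E) [μ.IsAddHaarMeasure] :
    ∫⁻ x, logKernel R (x, 0) ∂μ ≠ ⊤ := by
  have h_int : IntegrableOn (fun x ↦ (R / ‖x‖) ^ (2⁻¹ : ℝ) / 2⁻¹) (Metric.ball 0 R) μ := by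
    refine integrableOn_ball_of_norm_le_rpow (α := 2⁻¹) (C := R ^ (2⁻¹ : ℝ) / 2⁻¹)
      Module.finrank_pos ?_ (.of_forall fun x ↦ ?_) (Measurable.aestronglyMeasurable (by fun_prop))
    · exact lt_of_lt_of_le (by norm_num) (Nat.one_le_cast.2 Module.finrank_pos)
    · rw [Real.norm_of_nonneg (by positivity), Real.div_rpow (by positivity) (by positivity),
        Real.rpow_neg (by positivity)]
      exact le_of_eq (by ring)
  have h_le : ∀ᵐ x ∂μ, logKernel R (x, 0) ≤
      (Metric.ball 0 R).indicator (fun x ↦ .ofReal ((R / ‖x‖) ^ (2⁻¹ : ℝ) / 2⁻¹)) x := by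
    filter_upwards [Measure.ae_ne μ 0] with x hx
    rw [logKernel_of_ne hR hx, dist_zero_right]
    by_cases hxR : x ∈ Metric.ball 0 R
    · rw [indicator_of_mem hxR]
      exact ENNReal.ofReal_le_ofReal (Real.log_le_rpow_div (by positivity) (by norm_num))
    · rw [mem_ball_zero_iff, not_lt] at hxR
      rw [ENNReal.ofReal_of_nonpos (Real.log_nonpos (by positivity)
        (div_le_one_of_le₀ hxR (by positivity)))]
      exact zero_le
  refine ne_top_of_le_ne_top ?_ (lintegral_mono_ae h_le)
  rw [lintegral_indicator measurableSet_ball]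
  exact h_int.lintegral_lt_top.ne

lemma mutualEnergy_logKernel_ne_top_of_le_smul (hR : 0 < R) {μ ν : Measure E}
    [μ.IsAddHaarMeasure] [IsFiniteMeasure ν] {c : ℝ≥0∞} (hc : c ≠ ⊤) (hν : ν ≤ c • μ) :
    mutualEnergy (logKernel R) ν ν ≠ ⊤ := by
  have h_potential (y : E) :
      ∫⁻ x, logKernel R (x, y) ∂ν ≤ c * ∫⁻ x, logKernel R (x, 0) ∂μ := by
    rw [← lintegral_logKernel_left_eq μ R y]
    exact (lintegral_mono' hν le_rfl).trans_eq (lintegral_smul_measure _ _)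
  have h_finite := lintegral_logKernel_zero_ne_top hR μ
  refine ne_top_of_le_ne_top ?_ ((lintegral_prod_symm _
    continuous_logKernel.measurable.aemeasurable).trans_le (lintegral_mono h_potential))
  rw [lintegral_const]
  finiteness

end FiniteEnergy

section LogEnergy

lemma ofReal_add_add_ofReal_neg {a b : ℝ} (hb : 0 ≤ b) (hab : 0 ≤ a + b) :
    ENNReal.ofReal (a + b) + .ofReal (-a) = .ofReal a + .ofReal b := by
  rcases le_total 0 a with ha | ha
  · rw [ENNReal.ofReal_add ha hb, ENNReal.ofReal_of_nonpos (neg_nonpos.2 ha), add_zero]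
  · rw [ENNReal.ofReal_of_nonpos ha, ← ENNReal.ofReal_add hab (neg_nonneg.2 ha)]
    ring_nf

lemma coe_ennreal_sub_eq_of_add_eq_add {a b c : ℝ≥0∞} {r : ℝ} (hb : b ≠ ⊤) (hr : 0 ≤ r)
    (h : c + b = a + .ofReal r) : (a : EReal) - b = c - r := by
  lift b to ℝ≥0 using hb
  have h : (c : EReal) + (b : ℝ) = a + r := by
    simpa [EReal.coe_ennreal_ofReal, hr, EReal.coe_nnreal_eq_coe_real] using
      congrArg ((↑) : ℝ≥0∞ → EReal) h
  calc (a : EReal) - (b : ℝ≥0∞) = a + r - r - (b : ℝ) := by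
        rw [EReal.add_sub_cancel_right, EReal.coe_nnreal_eq_coe_real]
    _ = c + (b : ℝ) - (b : ℝ) - r := by
        rw [← h]
        simp only [sub_eq_add_neg, add_right_comm _ (-(r : EReal))]
    _ = c - r := by rw [EReal.add_sub_cancel_right]

lemma logKernel_add_ofReal_neg_log_inv_dist {X : Type*} [MetricSpace X] {R : ℝ≥0} (hR : 1 ≤ R)
    {p : X × X} (hp : p.1 ≠ p.2) (hpR : dist p.1 p.2 ≤ R) :
    logKernel R p + .ofReal (-Real.log (dist p.1 p.2)⁻¹) =
      .ofReal (Real.log (dist p.1 p.2)⁻¹) + .ofReal (Real.log R) := by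
  have h_pos : 0 < dist p.1 p.2 := dist_pos.2 hp
  have h_log : Real.log (R / dist p.1 p.2) = Real.log (dist p.1 p.2)⁻¹ + Real.log R := by
    rw [Real.log_div (by positivity) h_pos.ne', Real.log_inv, neg_add_eq_sub]
  rw [logKernel_of_ne (by positivity) hp, h_log]
  refine ofReal_add_add_ofReal_neg (Real.log_nonneg hR) ?_
  rw [← h_log]
  exact Real.log_nonneg ((one_le_div h_pos).2 hpR)

lemma logEnergy_eq_mutualEnergy_logKernel_sub {D : Set ℂ} {R : ℝ≥0} (hR : 1 ≤ R)
    (hDR : Metric.ediam D ≤ R) {μ : Measure ℂ} [IsProbabilityMeasure μ] [NullSingletonClass μ]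
    (hμD : μ Dᶜ = 0) :
    logEnergy μ = mutualEnergy (logKernel R) μ μ - (Real.log R : ℝ) := by
  have h_off_diag : ∀ᵐ p ∂(μ.prod μ), p ∈ {q : ℂ × ℂ | q.1 ≠ q.2} := ae_prod_ne μ μ
  have h_dist : ∀ᵐ p ∂(μ.prod μ), dist p.1 p.2 ≤ R := by
    filter_upwards [ae_prod_edist_le hDR hμD hμD] with p hpR
    rwa [edist_le_coe, ← NNReal.coe_le_coe, coe_nndist] at hpR
  have h_log : 0 ≤ Real.log R := Real.log_nonneg hR
  have h_neg : ∫⁻ p, ENNReal.ofReal (-Real.log (dist p.1 p.2)⁻¹) ∂(μ.prod μ) ≠ ⊤ := by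
    refine ne_top_of_le_ne_top (b := ∫⁻ _, .ofReal (Real.log R) ∂(μ.prod μ)) (by simp)
      (lintegral_mono_ae ?_)
    filter_upwards [h_off_diag, h_dist] with p hp hpR
    rw [Real.log_inv, neg_neg]
    exact ENNReal.ofReal_le_ofReal (Real.log_le_log (dist_pos.2 hp) hpR)
  have h_shift : mutualEnergy (logKernel R) μ μ +
      ∫⁻ p, ENNReal.ofReal (-Real.log (dist p.1 p.2)⁻¹) ∂(μ.prod μ) =
      ∫⁻ p, ENNReal.ofReal (Real.log (dist p.1 p.2)⁻¹) ∂(μ.prod μ) + .ofReal (Real.log R) := by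
    have h_const : ENNReal.ofReal (Real.log R) = ∫⁻ _, .ofReal (Real.log R) ∂(μ.prod μ) := by simp
    rw [mutualEnergy, h_const, ← lintegral_add_left continuous_logKernel.measurable,
      ← lintegral_add_right _ measurable_const]
    refine lintegral_congr_ae ?_
    filter_upwards [h_off_diag, h_dist] with p hp hpR
    exact logKernel_add_ofReal_neg_log_inv_dist hR hp hpR
  rw [logEnergy, Measure.restrict_eq_self_of_ae_mem h_off_diag]
  simp only [← dist_eq_norm_sub]
  exact coe_ennreal_sub_eq_of_add_eq_add h_neg h_log h_shift

end LogEnergy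

section ExternalField

lemma exists_continuous_nnreal_eqOn_sub_const {X : Type*} [TopologicalSpace X] [T4Space X]
    {D : Set X} (hD : IsCompact D) {V : X → ℝ} (hV : ContinuousOn V D) :
    ∃ (U : X → ℝ≥0) (C : ℝ), Continuous U ∧ EqOn V (fun x ↦ U x - C) D := by
  obtain ⟨g, hg⟩ := ContinuousMap.exists_restrict_eq hD.isClosed ⟨D.domRestrict V, hV.domRestrict⟩
  have hg (x) (hx : x ∈ D) : g x = V x := DFunLike.congr_fun hg ⟨x, hx⟩
  obtain ⟨c, hc⟩ := hD.bddBelow_image hV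
  refine ⟨fun x ↦ (g x - c).toNNReal, -c, by fun_prop, fun x hx ↦ ?_⟩
  have hcx : c ≤ V x := hc (mem_image_of_mem V hx)
  simp [hg x hx, hcx]

lemma coe_integral_eq_coe_lintegral_sub {X : Type*} [TopologicalSpace X] [MeasurableSpace X]
    [OpensMeasurableSpace X] [T2Space X] {D : Set X} (hD : IsCompact D) {V : X → ℝ} {U : X → ℝ≥0}
    (hU : Continuous U) {C : ℝ} (hVU : EqOn V (fun x ↦ U x - C) D) {μ : Measure X}
    [IsProbabilityMeasure μ] (hμD : μ Dᶜ = 0) :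
    ((∫ x, V x ∂μ : ℝ) : EReal) = (∫⁻ x, U x ∂μ : ℝ≥0∞) - C := by
  have hU_int : Integrable (fun x ↦ (U x : ℝ)) μ := by
    rw [← Measure.restrict_eq_self_of_ae_mem (show ∀ᵐ x ∂μ, x ∈ D from hμD)]
    exact (NNReal.continuous_coe.comp hU).continuousOn.integrableOn_compact hD
  have hV_int : ∫ x, V x ∂μ = ∫ x, (U x : ℝ) ∂μ - C := by
    rw [integral_congr_ae (show ∀ᵐ x ∂μ, V x = U x - C from
      (show ∀ᵐ x ∂μ, x ∈ D from hμD).mono hVU), integral_sub hU_int (integrable_const C)]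
    simp
  have hU_lint : ∫⁻ x, U x ∂μ = .ofReal (∫ x, (U x : ℝ) ∂μ) := by
    rw [ofReal_integral_eq_lintegral_ofReal hU_int (.of_forall fun x ↦ NNReal.zero_le_coe)]
    simp
  rw [hV_int, hU_lint, EReal.coe_ennreal_ofReal,
    max_eq_left (integral_nonneg fun x ↦ NNReal.zero_le_coe), EReal.coe_sub]

lemma weightedEnergy_eq_mutualEnergy_sub {D : Set ℂ} (hD : IsCompact D) {R : ℝ≥0} (hR : 1 ≤ R)
    (hDR : Metric.ediam D ≤ R) {V : ℂ → ℝ} {U : ℂ → ℝ≥0} (hU : Continuous U) {C : ℝ}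
    (hVU : EqOn V (fun z ↦ U z - C) D) {μ : Measure ℂ} [IsProbabilityMeasure μ]
    [NullSingletonClass μ] (hμD : μ Dᶜ = 0) :
    weightedEnergy V μ =
      mutualEnergy (fieldKernel (fun z ↦ U z) (logKernel R)) μ μ - (C + Real.log R : ℝ) := by
  rw [weightedEnergy, coe_integral_eq_coe_lintegral_sub hD hU hVU hμD,
    logEnergy_eq_mutualEnergy_logKernel_sub hR hDR hμD, mutualEnergy_fieldKernel (by fun_prop),
    EReal.coe_ennreal_add, EReal.coe_add,
    EReal.add_sub_add_comm (.inl (EReal.coe_ne_bot _)) (.inl (EReal.coe_ne_top _))]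

end ExternalField

section Equilibrium

variable {E : Type*} [NormedAddCommGroup E] [InnerProductSpace ℝ E] [FiniteDimensional ℝ E]
  [MeasurableSpace E] [BorelSpace E] {D : Set E} {R : ℝ≥0} {U : E → ℝ≥0∞}

lemma mutualEnergy_fieldKernel_logKernel_midpoint_lt (hU : Measurable U) (hR : 0 < R)
    (hDR : Metric.ediam D ≤ R) {μ ν : Measure E} [IsProbabilityMeasure μ] [IsProbabilityMeasure ν]
    (hμD : μ Dᶜ = 0) (hνD : ν Dᶜ = 0)
    (h_eq : mutualEnergy (fieldKernel U (logKernel R)) ν ν =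
      mutualEnergy (fieldKernel U (logKernel R)) μ μ)
    (h_top : mutualEnergy (fieldKernel U (logKernel R)) μ μ ≠ ⊤) (hμν : μ ≠ ν) :
    mutualEnergy (fieldKernel U (logKernel R)) ((2⁻¹ : ℝ≥0∞) • (μ + ν)) ((2⁻¹ : ℝ≥0∞) • (μ + ν)) <
      mutualEnergy (fieldKernel U (logKernel R)) μ μ := by
  obtain ⟨hUμ, hμ⟩ : ∫⁻ x, U x ∂μ ≠ ⊤ ∧ mutualEnergy (logKernel R) μ μ ≠ ⊤ := by
    rwa [mutualEnergy_fieldKernel hU, ENNReal.add_ne_top] at h_top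
  obtain ⟨hUν, hν⟩ : ∫⁻ x, U x ∂ν ≠ ⊤ ∧ mutualEnergy (logKernel R) ν ν ≠ ⊤ := by
    rwa [← h_eq, mutualEnergy_fieldKernel hU, ENNReal.add_ne_top] at h_top
  exact mutualEnergy_midpoint_lt h_eq h_top (mutualEnergy_fieldKernel_add_lt hU hUμ hUν
    (mutualEnergy_logKernel_add_lt hR hDR hμD hνD hμ hν hμν))

theorem exists_forall_mutualEnergy_fieldKernel_logKernel_lt (hU : Continuous U) (hR : 0 < R)
    (hD : IsCompact D) (hDR : Metric.ediam D ≤ R) {ρ : Measure E} [IsProbabilityMeasure ρ]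
    (hρD : ρ Dᶜ = 0) (hρ : mutualEnergy (fieldKernel U (logKernel R)) ρ ρ ≠ ⊤) :
    ∃ μ : Measure E, IsProbabilityMeasure μ ∧ μ Dᶜ = 0 ∧ NullSingletonClass μ ∧
      ∀ ν : Measure E, IsProbabilityMeasure ν → ν Dᶜ = 0 → ν ≠ μ →
        mutualEnergy (fieldKernel U (logKernel R)) μ μ <
          mutualEnergy (fieldKernel U (logKernel R)) ν ν := by
  have hD' : D.Nonempty := by
    by_contra! rfl
    simp at hρD
  have h_cont : Continuous (fieldKernel U (logKernel R)) :=
    (hU.comp continuous_fst).add continuous_logKernel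
  obtain ⟨μ, _, hμD, hμ_min⟩ := exists_forall_mutualEnergy_le h_cont hD hD'
  have hμ : mutualEnergy (fieldKernel U (logKernel R)) μ μ ≠ ⊤ :=
    ne_top_of_le_ne_top hρ (hμ_min ρ inferInstance hρD)
  refine ⟨μ, inferInstance, hμD, nullSingletonClass_of_mutualEnergy_logKernel_ne_top hR ?_,
    fun ν _ hνD hνμ ↦ lt_of_le_of_ne (hμ_min ν inferInstance hνD) fun h_eq ↦ ?_⟩
  · rw [mutualEnergy_fieldKernel hU.measurable, ENNReal.add_ne_top] at hμ
    exact hμ.2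
  · have := isProbabilityMeasure_midpoint μ ν
    exact (mutualEnergy_fieldKernel_logKernel_midpoint_lt hU.measurable hR hDR hμD hνD h_eq.symm
      hμ hνμ.symm).not_ge (hμ_min _ inferInstance (by simp [hμD, hνD]))

end Equilibrium

section EquilibriumMeasure

lemma exists_one_le_ediam_le {X : Type*} [PseudoEMetricSpace X] {D : Set X}
    (hD : Metric.ediam D ≠ ⊤) : ∃ R : ℝ≥0, 1 ≤ R ∧ Metric.ediam D ≤ R :=
  ⟨max 1 (Metric.ediam D).toNNReal, le_max_left _ _, by simp [ENNReal.coe_toNNReal hD]⟩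

lemma exists_logEnergy_ne_top {D : Set ℂ} (hD : IsCompact D) (hDpos : 0 < volume D) :
    ∃ μ : Measure ℂ,
      (IsProbabilityMeasure μ ∧ μ Dᶜ = 0 ∧ ∀ z, μ {z} = 0) ∧ logEnergy μ ≠ ⊤ := by
  obtain ⟨R, hR, hDR⟩ := exists_one_le_ediam_le hD.isBounded.ediam_ne_top
  have hμD : volume[|D] Dᶜ = 0 := ae_cond_mem hD.measurableSet
  have := cond_isProbabilityMeasure_of_finite hDpos.ne' hD.measure_lt_top.ne
  have h_le : volume[|D] ≤ (volume D)⁻¹ • volume :=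
    IsOrderedSMul.smul_le_smul_left _ _ Measure.restrict_le_self _
  have hμ := mutualEnergy_logKernel_ne_top_of_le_smul (one_pos.trans_le hR)
    (ENNReal.inv_ne_top.2 hDpos.ne') h_le
  have := nullSingletonClass_of_mutualEnergy_logKernel_ne_top (one_pos.trans_le hR) hμ
  refine ⟨volume[|D], ⟨inferInstance, hμD, measure_singleton⟩, ?_⟩
  rw [logEnergy_eq_mutualEnergy_logKernel_sub hR hDR hμD]
  lift mutualEnergy (logKernel R) volume[|D] volume[|D] to ℝ≥0 using hμ with e
  exact EReal.coe_ne_top (e - Real.log R)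

theorem exists_forall_weightedEnergy_lt {D : Set ℂ} (hD : IsCompact D) {V : ℂ → ℝ}
    (hV : ContinuousOn V D) {ρ : Measure ℂ} [IsProbabilityMeasure ρ] [NullSingletonClass ρ]
    (hρD : ρ Dᶜ = 0) (hρ : logEnergy ρ ≠ ⊤) :
    ∃ μ₀ : Measure ℂ, IsProbabilityMeasure μ₀ ∧ μ₀ Dᶜ = 0 ∧ NullSingletonClass μ₀ ∧
      ∀ μ : Measure ℂ, IsProbabilityMeasure μ → μ Dᶜ = 0 → NullSingletonClass μ → μ ≠ μ₀ →
        weightedEnergy V μ₀ < weightedEnergy V μ := by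
  obtain ⟨R, hR, hDR⟩ := exists_one_le_ediam_le hD.isBounded.ediam_ne_top
  obtain ⟨U, C, hU, hVU⟩ := exists_continuous_nnreal_eqOn_sub_const hD hV
  have h_energy_eq (μ : Measure ℂ) [IsProbabilityMeasure μ] [NullSingletonClass μ]
      (hμD : μ Dᶜ = 0) := weightedEnergy_eq_mutualEnergy_sub hD hR hDR hU hVU hμD
  have hρ_top : mutualEnergy (fieldKernel (fun z ↦ U z) (logKernel R)) ρ ρ ≠ ⊤ := by
    intro h_top
    have h_eq := h_energy_eq ρ hρD
    rw [h_top, EReal.coe_ennreal_top, EReal.top_sub_coe] at h_eq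
    exact EReal.add_ne_top (EReal.coe_ne_top _) hρ h_eq
  obtain ⟨μ₀, _, hμ₀D, _, h_lt⟩ := exists_forall_mutualEnergy_fieldKernel_logKernel_lt
    (ENNReal.continuous_coe.comp hU) (one_pos.trans_le hR) hD hDR hρD hρ_top
  refine ⟨μ₀, inferInstance, hμ₀D, inferInstance, fun μ _ hμD _ hμ ↦ ?_⟩
  rw [h_energy_eq μ₀ hμ₀D, h_energy_eq μ hμD]
  exact EReal.sub_lt_sub_of_lt_of_le (EReal.coe_ennreal_lt_coe_ennreal_iff.2
    (h_lt μ inferInstance hμD hμ)) le_rfl (EReal.coe_ne_bot _) (EReal.coe_ne_top _)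

theorem stmt_13_general {D : Set ℂ} (hD : IsCompact D)
    (hD_energy : ∃ μ : Measure ℂ,
      (IsProbabilityMeasure μ ∧ μ Dᶜ = 0 ∧ ∀ z, μ {z} = 0) ∧ logEnergy μ ≠ ⊤)
    {V : ℂ → ℝ} (hV : ContinuousOn V D) :
    ∃! μ₀ : Measure ℂ,
      (IsProbabilityMeasure μ₀ ∧ μ₀ Dᶜ = 0 ∧ (∀ z : ℂ, μ₀ {z} = 0)) ∧
      ∀ μ : Measure ℂ, IsProbabilityMeasure μ → μ Dᶜ = 0 → (∀ z : ℂ, μ {z} = 0) →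
        weightedEnergy V μ₀ ≤ weightedEnergy V μ := by
  obtain ⟨ρ, ⟨_, hρD, hρ_singleton⟩, hρ⟩ := hD_energy
  have : NullSingletonClass ρ := ⟨hρ_singleton⟩
  obtain ⟨μ₀, hμ₀, hμ₀D, _, h_lt⟩ := exists_forall_weightedEnergy_lt hD hV hρD hρ
  refine ⟨μ₀, ⟨⟨hμ₀, hμ₀D, measure_singleton⟩, fun μ hμ hμD hμ_singleton ↦ ?_⟩,
    fun μ ⟨⟨hμ, hμD, hμ_singleton⟩, hμ_min⟩ ↦ ?_⟩
  · obtain rfl | h_ne := eq_or_ne μ μ₀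
    exacts [le_rfl, (h_lt μ hμ hμD ⟨hμ_singleton⟩ h_ne).le]
  · by_contra h_ne
    exact (h_lt μ hμ hμD ⟨hμ_singleton⟩ h_ne).not_ge (hμ_min μ₀ hμ₀ hμ₀D measure_singleton)

end EquilibriumMeasure

/-- Every continuous potential `V` on a compact domain `D ⊆ ℂ` of positive Lebesgue measure
admits a unique equilibrium measure: a Borel probability measure without point masses
minimizing `I_V` over all atomless Borel probability measures on `D`. -/
theorem stmt_13 (D : Set ℂ) (hD : IsCompact D) (hDpos : 0 < volume D)
    (V : ℂ → ℝ) (hV : ContinuousOn V D) :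
    ∃! μ₀ : Measure ℂ,
      (IsProbabilityMeasure μ₀ ∧ μ₀ Dᶜ = 0 ∧ (∀ z : ℂ, μ₀ {z} = 0)) ∧
      ∀ μ : Measure ℂ, IsProbabilityMeasure μ → μ Dᶜ = 0 → (∀ z : ℂ, μ {z} = 0) →
        weightedEnergy V μ₀ ≤ weightedEnergy V μ := by
  exact stmt_13_general hD (exists_logEnergy_ne_top hD hDpos) hV
end

section
/- Let γ be the polynomial curve with exterior harmonic moments (t_k) and area πt₀, interior domain D₊, and V(z) = (1/t₀)(|z|² − 2Re Σ_{k=1}^{d+1} t_k z^k). Then E(z) = V(z) + (2/(πt₀)) ∫_{D₊} log|z/ζ − 1|^{-1} d²ζ vanishes identically on D₊, and on the exterior of γ (within the annular domain of the Schwarz reflection) its Wirtinger derivative is ∂_{z̄} E(z) = (z − ρ(z))/t₀, where ρ is the Schwarz reflection of γ. -/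
open Complex MeasureTheory
open Filter Topology Bornology

/-!
Let `D` be the interior domain of the curve, `C(z) = ∫_D dA(ζ) / (ζ - z)` the Cauchy transform of
its area, and `P = ∑ t_k z^k`. Since `2 ∂_z log |z - ζ| = -1 / (ζ - z)`, the potential has
`t₀ ∂_z E = conj z - P'(z) + C(z) / π`. Green's formula turns `C(z)` into a contour integral of
`(conj ζ - conj z) / (ζ - z)` over the curve, on which `conj ζ` is the Schwarz function `S(ζ)`.
Expanding `1 / (ζ - z)` to order `n` in `z / ζ` produces the moments, hence `P'(z)`, and a remainder
containing `S(ζ) ζ^(-n)`, which vanishes at infinity; so pushing the contour to infinity gives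
`C = π (P' - conj z)` inside the curve and, with the residue picked up at `z`, `C = π (P' - S)`
outside. Therefore `E` is constant on `D`, equal to `E(0) = 0`, and `∂_z E = (conj z - S) / t₀`
outside.

Injectivity on the circle propagates to the closed exterior because `h` is a proper local
homeomorphism there which omits `0`. The complement of its image is connected, hence equal to `D`.
-/

section Topology

variable {X Y : Type*} [TopologicalSpace X] [TopologicalSpace Y] {f : X → Y} {E : Set X} {x y : X}

theorem isClosed_image_of_tendsto_cocompact [T2Space Y] [WeaklyLocallyCompactSpace Y]
    (hf : ContinuousOn f E) (hE : IsClosed E) (hlim : Tendsto f (cocompact X) (cocompact Y)) :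
    IsClosed (f '' E) := by
  have hproper : IsProperMap (E.domRestrict f) := isProperMap_iff_tendsto_cocompact.mpr
    ⟨hf.domRestrict, hlim.comp hE.isClosedEmbedding_subtypeVal.tendsto_cocompact⟩
  simpa only [Set.range_domRestrict] using hproper.isClosedMap.isClosed_range

theorem eventually_unique_preimage (hf : IsLocalHomeomorphOn f E) (hE : IsClosed E)
    (hcl : ∀ C ⊆ E, IsClosed C → IsClosed (f '' C)) (hx : x ∈ E)
    (huniq : ∀ y ∈ E, f y = f x → y = x) : ∀ᶠ z in 𝓝 x, ∀ y ∈ E, f y = f z → y = z := by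
  obtain ⟨e, hxe, rfl⟩ := hf x hx
  have hfar : e x ∉ e '' (E \ e.source) := by
    rintro ⟨y, ⟨hyE, hye⟩, hyx⟩
    exact hye (huniq y hyE hyx ▸ hxe)
  have hopen : IsOpen (e '' (E \ e.source))ᶜ :=
    (hcl _ Set.sdiff_subset (hE.sdiff e.open_source)).isOpen_compl
  filter_upwards [(e.continuousAt hxe) (hopen.mem_nhds hfar), e.open_source.mem_nhds hxe]
    with z hz hze y hyE hyz
  have hye : y ∈ e.source := by_contra fun hye => hz ⟨y, ⟨hyE, hye⟩, hyz⟩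
  exact e.injOn hye hze hyz

theorem eventually_exists_ne_preimage [T2Space X] (hf : IsLocalHomeomorphOn f E) (hx : x ∈ E)
    (hy : y ∈ interior E) (hne : y ≠ x) (hyx : f y = f x) :
    ∀ᶠ z in 𝓝 x, ∃ y' ∈ E, f y' = f z ∧ y' ≠ z := by
  obtain ⟨U, V, hU, hV, hyU, hxV, hUV⟩ := t2_separation hne
  have himage : f '' (U ∩ interior E) ∈ 𝓝 (f x) := by
    rw [← hyx, ← hf.map_nhds_eq (interior_subset hy)]
    exact image_mem_map ((hU.inter isOpen_interior).mem_nhds ⟨hyU, hy⟩)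
  filter_upwards [(hf.continuousAt hx) himage, hV.mem_nhds hxV] with z hz hzV
  obtain ⟨y', ⟨hy'U, hy'E⟩, hy'z⟩ := hz
  exact ⟨y', interior_subset hy'E, hy'z, fun h => hUV.ne_of_mem hy'U hzV h⟩

theorem unique_preimage_of_isPreconnected [T2Space X] {S : Set X} (hf : IsLocalHomeomorphOn f E)
    (hE : IsClosed E) (hcl : ∀ C ⊆ E, IsClosed C → IsClosed (f '' C)) (hS : IsPreconnected S)
    (hSE : S ⊆ E) (hint : ∀ x ∈ S, ∀ y ∈ E, f y = f x → y ≠ x → y ∈ interior E)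
    (hx : x ∈ S) (hxu : ∀ z ∈ E, f z = f x → z = x) (hy : y ∈ S) : ∀ z ∈ E, f z = f y → z = y := by
  refine (hS.induction₂
    (fun x y => (∀ z ∈ E, f z = f x → z = x) ↔ ∀ z ∈ E, f z = f y → z = y)
    (fun x hx => nhdsWithin_le_nhds ?_) (fun _ _ _ _ _ _ => Iff.trans) (fun _ _ _ _ => Iff.symm)
    hx hy).mp hxu
  by_cases hxu : ∀ z ∈ E, f z = f x → z = x
  · filter_upwards [eventually_unique_preimage hf hE hcl (hSE hx) hxu] with y hy
    exact iff_of_true hxu hy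
  · have hxu' := hxu
    push Not at hxu'
    obtain ⟨z, hz, hzx, hne⟩ := hxu'
    filter_upwards [eventually_exists_ne_preimage hf (hSE hx) (hint x hx z hz hzx hne) hne hzx]
      with y ⟨z', hz', hz'y, hne'⟩
    exact iff_of_false hxu fun h => hne' (h z' hz' hz'y)

/- Otherwise `f '' E = f '' interior E` would be clopen. -/
theorem exists_mem_frontier_unique_preimage [PreconnectedSpace Y] (hf : IsLocalHomeomorphOn f E)
    (hne : E.Nonempty) (hcl : IsClosed (f '' E)) (huniv : f '' E ≠ Set.univ)
    (hinj : Set.InjOn f (frontier E)) :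
    ∃ x ∈ frontier E, ∀ y ∈ E, f y = f x → y = x := by
  by_contra! hcon
  refine huniv (IsClopen.eq_univ ⟨hcl, isOpen_iff_mem_nhds.mpr ?_⟩ (hne.image f))
  rintro _ ⟨x, hx, rfl⟩
  obtain ⟨y, hy, hyx⟩ : ∃ y ∈ interior E, f y = f x := by
    by_cases hxi : x ∈ interior E
    · exact ⟨x, hxi, rfl⟩
    have hxf : x ∈ frontier E := ⟨subset_closure hx, hxi⟩
    obtain ⟨y, hyE, hyx, hyne⟩ := hcon x hxf
    exact ⟨y, by_contra fun hyi => hyne (hinj ⟨subset_closure hyE, hyi⟩ hxf hyx), hyx⟩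
  rw [← hyx, ← hf.map_nhds_eq (interior_subset hy)]
  exact image_mem_map (mem_interior_iff_mem_nhds.mp hy)

theorem injOn_of_injOn_frontier [T2Space X] [PreconnectedSpace Y] (hf : IsLocalHomeomorphOn f E)
    (hcl : ∀ C ⊆ E, IsClosed C → IsClosed (f '' C)) (hE : IsClosed E) (hEc : IsConnected E)
    (hfr : IsPreconnected (frontier E)) (huniv : f '' E ≠ Set.univ)
    (hinj : Set.InjOn f (frontier E)) : Set.InjOn f E := by
  obtain ⟨x, hxf, hx⟩ := exists_mem_frontier_unique_preimage hf hEc.nonempty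
    (hcl E subset_rfl hE) huniv hinj
  have hfE := hE.frontier_subset
  have hfrontier : ∀ y ∈ frontier E, ∀ z ∈ E, f z = f y → z = y := fun y hy =>
    unique_preimage_of_isPreconnected hf hE hcl hfr hfE (fun u hu v hv hvu hne =>
      by_contra fun hvi => hne (hinj ⟨subset_closure hv, hvi⟩ hu hvu)) hxf hx hy
  have hall : ∀ y ∈ E, ∀ z ∈ E, f z = f y → z = y := fun y hy =>
    unique_preimage_of_isPreconnected hf hE hcl hEc.isPreconnected subset_rfl
      (fun u hu v hv hvu hne => by_contra fun hvi =>
        hne (hfrontier v ⟨subset_closure hv, hvi⟩ u hu hvu.symm).symm) (hfE hxf) hx hy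
  exact fun y hy z hz hyz => hall z hz y hy hyz

theorem isPreconnected_compl_of_collar [PreconnectedSpace Y] {K T : Set Y} (hK : IsClosed K)
    (hT : IsPreconnected T) (hTK : T ⊆ Kᶜ) (hnhds : T ∪ K ∈ 𝓝ˢ K) : IsPreconnected Kᶜ := by
  have hside : ∀ u v, IsOpen u → IsOpen v → Kᶜ ⊆ u ∪ v → Kᶜ ∩ (u ∩ v) = ∅ → T ⊆ u →
      Kᶜ ⊆ u ∨ Kᶜ ⊆ v := fun u v hu hv huv hdisj hTu => by
    have hclopen : IsClopen (Kᶜ ∩ v) := by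
      refine ⟨⟨isOpen_iff_mem_nhds.mpr fun y hy => ?_⟩, hK.isOpen_compl.inter hv⟩
      by_cases hyK : y ∈ K
      · filter_upwards [mem_nhdsSet_iff_forall.mp hnhds y hyK] with z hz hzv
        exact hz.elim (fun hzT => hdisj.subset ⟨hzv.1, hTu hzT, hzv.2⟩) hzv.1
      · filter_upwards [hu.mem_nhds ((huv hyK).resolve_right fun hyv => hy ⟨hyK, hyv⟩)]
          with z hz hzv
        exact hdisj.subset ⟨hzv.1, hz, hzv.2⟩
    rcases isClopen_iff.mp hclopen with h | h
    · exact .inl fun y hy => (huv hy).resolve_right fun hyv => h.subset ⟨hy, hyv⟩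
    · exact .inr fun y _ => (h.superset (Set.mem_univ y)).2
  refine isPreconnected_iff_subset_of_disjoint.mpr fun u v hu hv huv hdisj => ?_
  rcases isPreconnected_iff_subset_of_disjoint.mp hT u v hu hv (hTK.trans huv)
    (Set.subset_eq_empty (Set.inter_subset_inter_left _ hTK) hdisj) with hTu | hTv
  · exact hside u v hu hv huv hdisj hTu
  · exact (hside v u hv hu (Set.union_comm u v ▸ huv) (Set.inter_comm u v ▸ hdisj) hTv).symm

theorem isPreconnected_compl_image [PreconnectedSpace Y] (hf : IsLocalHomeomorphOn f E)
    (hE : IsClosed E) (hcl : ∀ C ⊆ E, IsClosed C → IsClosed (f '' C)) (hinj : Set.InjOn f E)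
    (hcont : ∀ᶠ x in 𝓝ˢ E, ContinuousAt f x)
    (hcollar : ∀ N ∈ 𝓝ˢ E, ∃ S ⊆ N \ E, IsPreconnected S ∧ S ∪ E ∈ 𝓝ˢ E) :
    IsPreconnected (f '' E)ᶜ := by
  have huniq : ∀ᶠ x in 𝓝ˢ E, ∀ y ∈ E, f y = f x → y = x :=
    eventually_nhdsSet_iff_forall.mpr fun x hx =>
      eventually_unique_preimage hf hE hcl hx fun y hy hyx => hinj hy hx hyx
  obtain ⟨S, hSN, hS, hSE⟩ := hcollar _ (huniq.and hcont)
  refine isPreconnected_compl_of_collar (hcl E subset_rfl hE)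
    (hS.image f fun x hx => (hSN hx).1.2.continuousWithinAt) ?_ ?_
  · rintro _ ⟨x, hx, rfl⟩ ⟨y, hy, hyx⟩
    exact (hSN hx).2 ((hSN hx).1.1 y hy hyx ▸ hy)
  · rw [← Set.image_union]
    refine mem_nhdsSet_iff_forall.mpr ?_
    rintro _ ⟨x, hx, rfl⟩
    rw [← hf.map_nhds_eq hx]
    exact image_mem_map (mem_nhdsSet_iff_forall.mp hSE x hx)

theorem eq_compl_of_frontier_eq {A D F : Set Y} (hDo : IsOpen D) (hDne : D.Nonempty)
    (hfr : frontier D = F) (hA : IsPreconnected A) (hAF : Disjoint A F) (hAD : ¬ A ⊆ D)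
    (hcompl : IsPreconnected (A ∪ F)ᶜ) : D = (A ∪ F)ᶜ := by
  have hcl : closure D ⊆ D ∪ F := by rw [← hfr, ← closure_eq_self_union_frontier]
  have hdisj : ∀ y ∈ A, y ∉ D := fun y hyA hyD => hAD <|
    hA.subset_of_closure_inter_subset hDo ⟨y, hyA, hyD⟩ fun z hz =>
      (hcl hz.1).resolve_right (hAF.notMem_of_mem_left hz.2)
  have hsub : D ⊆ (A ∪ F)ᶜ := by
    rintro y hyD (hyA | hyF)
    · exact hdisj y hyA hyD
    · exact (hDo.frontier_eq ▸ hfr ▸ hyF : y ∈ closure D \ D).2 hyD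
  obtain ⟨y, hy⟩ := hDne
  refine hsub.antisymm (hcompl.subset_of_closure_inter_subset hDo ⟨y, hsub hy, hy⟩ fun z hz =>
    (hcl hz.1).resolve_right fun hzF => hz.2 (.inr hzF))

end Topology

section Exterior

theorem isPreconnected_setOf_norm_mem {F : Type*} [NormedAddCommGroup F] [NormedSpace ℝ F]
    (hF : 1 < Module.rank ℝ F) {s : Set ℝ} (hs : IsPreconnected s) (hpos : ∀ ρ ∈ s, 0 < ρ) :
    IsPreconnected {w : F | ‖w‖ ∈ s} := by
  have himage : {w : F | ‖w‖ ∈ s} = (fun p : ℝ × F => p.1 • p.2) '' s ×ˢ Metric.sphere 0 1 := by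
    ext w
    constructor
    · intro hw
      have hw0 : ‖w‖ ≠ 0 := (hpos _ hw).ne'
      exact ⟨(‖w‖, ‖w‖⁻¹ • w), ⟨hw, by simp [norm_smul, hw0]⟩, smul_inv_smul₀ hw0 w⟩
    · rintro ⟨⟨ρ, u⟩, ⟨hρ, hu⟩, rfl⟩
      have hu : ‖u‖ = 1 := by simpa using hu
      simpa [norm_smul, hu, abs_of_pos (hpos ρ hρ)] using hρ
  rw [himage]
  exact (hs.prod (isPreconnected_sphere hF 0 1)).image _ (by fun_prop)

/-- The closed exterior of the unit disc, on which the exterior conformal map is studied. -/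
abbrev closedExterior : Set ℂ := {w | 1 ≤ ‖w‖}

theorem isClosed_closedExterior : IsClosed closedExterior :=
  isClosed_le continuous_const continuous_norm

theorem frontier_closedExterior : frontier closedExterior = Metric.sphere 0 1 := by
  have h : closedExterior = (Metric.ball (0 : ℂ) 1)ᶜ := by ext; simp
  rw [h, frontier_compl, frontier_ball _ one_ne_zero]

theorem closedExterior_eq_union :
    closedExterior = {w | 1 < ‖w‖} ∪ Metric.sphere 0 1 := by
  ext w
  simp [le_iff_lt_or_eq, eq_comm]

theorem isConnected_closedExterior : IsConnected closedExterior :=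
  ⟨⟨1, by simp⟩, isPreconnected_setOf_norm_mem (by simp) isPreconnected_Ici
    fun _ hρ => zero_lt_one.trans_le hρ⟩

theorem exists_collar_closedExterior {N : Set ℂ} (hN : N ∈ 𝓝ˢ closedExterior) :
    ∃ S ⊆ N \ closedExterior, IsPreconnected S ∧ S ∪ closedExterior ∈ 𝓝ˢ closedExterior := by
  obtain ⟨U, hU, hEU, hUN⟩ := mem_nhdsSet_iff_exists.mp hN
  have hsphere : Metric.sphere (0 : ℂ) 1 ⊆ U := fun w hw =>
    hEU (mem_sphere_zero_iff_norm.mp hw).ge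
  obtain ⟨δ, hδ, hδU⟩ := (isCompact_sphere (0 : ℂ) 1).exists_thickening_subset_open hU hsphere
  have hρ : max 0 (1 - δ) < 1 := by simp [hδ]
  refine ⟨{w | ‖w‖ ∈ Set.Ioo (max 0 (1 - δ)) 1}, fun w hw => ⟨hUN (hδU ?_), hw.2.not_ge⟩,
    isPreconnected_setOf_norm_mem (by simp) isPreconnected_Ioo
      fun _ hρ => (le_max_left _ _).trans_lt hρ.1, ?_⟩
  · obtain ⟨hw0, hwδ⟩ := max_lt_iff.mp hw.1
    refine Metric.mem_thickening_iff.mpr ⟨(‖w‖⁻¹ : ℝ) • w, by simp [hw0.ne'], ?_⟩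
    have hsub : w - ‖w‖⁻¹ • w = (1 - ‖w‖⁻¹) • w := by rw [sub_smul, one_smul]
    rw [dist_eq_norm, hsub, norm_smul, Real.norm_eq_abs, ← abs_norm w, ← abs_mul, abs_norm,
      sub_mul, one_mul, inv_mul_cancel₀ hw0.ne', abs_sub_lt_iff]
    constructor <;> linarith [hw.2]
  · refine mem_nhdsSet_iff_exists.mpr ⟨{w | max 0 (1 - δ) < ‖w‖},
      isOpen_lt continuous_const continuous_norm, fun w hw => hρ.trans_le hw, fun w hw => ?_⟩
    exact (lt_or_ge ‖w‖ 1).imp (fun h => ⟨hw, h⟩) id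

end Exterior

section ExteriorMap

/-- `h` is a conformal parametrization of the exterior of a Jordan curve by the exterior of the
unit disc, fixing `∞`, with conformal radius `r`; it extends analytically across the circle. -/
structure IsExteriorMap (h : ℂ → ℂ) (r : ℂ) : Prop where
  analyticOnNhd : AnalyticOnNhd ℂ h closedExterior
  deriv_ne_zero : ∀ w ∈ closedExterior, deriv h w ≠ 0
  injOn : Set.InjOn h closedExterior
  tendsto_div : Tendsto (fun w => h w / w) (cobounded ℂ) (𝓝 r)
  radius_ne_zero : r ≠ 0

/-- The interior domain of the curve `h '' Metric.sphere 0 1`, for an exterior map `h`. -/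
def interiorDomain (h : ℂ → ℂ) : Set ℂ := (h '' closedExterior)ᶜ

variable {h : ℂ → ℂ} {r : ℂ}

theorem tendsto_cocompact_of_tendsto_div (hr : r ≠ 0)
    (hlim : Tendsto (fun w => h w / w) (cobounded ℂ) (𝓝 r)) :
    Tendsto h (cocompact ℂ) (cocompact ℂ) := by
  rw [← Metric.cobounded_eq_cocompact, ← tendsto_norm_atTop_iff_cobounded]
  have hmul : Tendsto (fun w => ‖h w / w‖ * ‖w‖) (cobounded ℂ) atTop :=
    hlim.norm.pos_mul_atTop (norm_pos_iff.mpr hr) tendsto_norm_cobounded_atTop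
  refine hmul.congr' ?_
  filter_upwards [eventually_ne_cobounded 0] with w hw
  rw [← norm_mul, div_mul_cancel₀ _ hw]

theorem isLocalHomeomorphOn_of_deriv_ne_zero {𝕜 : Type*} [NontriviallyNormedField 𝕜]
    [CompleteSpace 𝕜] {f : 𝕜 → 𝕜} {s : Set 𝕜} (hf : AnalyticOnNhd 𝕜 f s)
    (hf' : ∀ x ∈ s, deriv f x ≠ 0) : IsLocalHomeomorphOn f s := fun x hx =>
  have hstrict := (hf x hx).hasStrictDerivAt.hasStrictFDerivAt_equiv (hf' x hx)
  ⟨hstrict.toOpenPartialHomeomorph f, hstrict.mem_toOpenPartialHomeomorph_source, rfl⟩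

theorem isClosed_image_exterior (ha : AnalyticOnNhd ℂ h closedExterior)
    (hlim : Tendsto h (cocompact ℂ) (cocompact ℂ)) {C : Set ℂ} (hC : C ⊆ closedExterior)
    (hCcl : IsClosed C) : IsClosed (h '' C) :=
  isClosed_image_of_tendsto_cocompact (ha.continuousOn.mono hC) hCcl hlim

theorem isExteriorMap_of_injOn_sphere (ha : AnalyticOnNhd ℂ h closedExterior)
    (hderiv : ∀ w ∈ closedExterior, deriv h w ≠ 0) (hinj : Set.InjOn h (Metric.sphere 0 1))
    (hne : h '' closedExterior ≠ Set.univ)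
    (hlim : Tendsto (fun w => h w / w) (cobounded ℂ) (𝓝 r)) (hr : r ≠ 0) :
    IsExteriorMap h r where
  analyticOnNhd := ha
  deriv_ne_zero := hderiv
  tendsto_div := hlim
  radius_ne_zero := hr
  injOn := injOn_of_injOn_frontier (isLocalHomeomorphOn_of_deriv_ne_zero ha hderiv)
    (fun _ => isClosed_image_exterior ha (tendsto_cocompact_of_tendsto_div hr hlim))
    isClosed_closedExterior isConnected_closedExterior
    (by simpa only [frontier_closedExterior] using isPreconnected_sphere (by simp) 0 1) hne
    (by rwa [frontier_closedExterior])

namespace IsExteriorMap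

theorem continuousOn_sphere (H : IsExteriorMap h r) : ContinuousOn h (Metric.sphere 0 1) :=
  H.analyticOnNhd.continuousOn.mono fun _ hw => (mem_sphere_zero_iff_norm.mp hw).ge

theorem continuousOn_deriv_sphere (H : IsExteriorMap h r) :
    ContinuousOn (deriv h) (Metric.sphere 0 1) :=
  H.analyticOnNhd.deriv.continuousOn.mono fun _ hw => (mem_sphere_zero_iff_norm.mp hw).ge

theorem differentiableAt (H : IsExteriorMap h r) {w : ℂ} (hw : w ∈ closedExterior) :
    DifferentiableAt ℂ h w :=
  (H.analyticOnNhd w hw).differentiableAt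

theorem differentiableAt_deriv (H : IsExteriorMap h r) {w : ℂ} (hw : w ∈ closedExterior) :
    DifferentiableAt ℂ (deriv h) w :=
  (H.analyticOnNhd w hw).deriv.differentiableAt

theorem tendsto_cocompact (H : IsExteriorMap h r) : Tendsto h (cocompact ℂ) (cocompact ℂ) :=
  tendsto_cocompact_of_tendsto_div H.radius_ne_zero H.tendsto_div

theorem isLocalHomeomorphOn (H : IsExteriorMap h r) : IsLocalHomeomorphOn h closedExterior :=
  isLocalHomeomorphOn_of_deriv_ne_zero H.analyticOnNhd H.deriv_ne_zero

theorem isClosed_image (H : IsExteriorMap h r) : IsClosed (h '' closedExterior) :=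
  isClosed_image_exterior H.analyticOnNhd H.tendsto_cocompact subset_rfl isClosed_closedExterior

theorem isPreconnected_interiorDomain (H : IsExteriorMap h r) :
    IsPreconnected (interiorDomain h) :=
  isPreconnected_compl_image H.isLocalHomeomorphOn isClosed_closedExterior
    (fun _ => isClosed_image_exterior H.analyticOnNhd H.tendsto_cocompact) H.injOn
    (eventually_nhdsSet_iff_forall.mpr fun w hw =>
      (H.analyticOnNhd w hw).eventually_analyticAt.mono fun _ => AnalyticAt.continuousAt)
    fun _ => exists_collar_closedExterior

theorem eq_interiorDomain_of_frontier_eq (H : IsExteriorMap h r) {D : Set ℂ} (hDo : IsOpen D)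
    (hDb : IsBounded D) (hDne : D.Nonempty)
    (hfr : frontier D = h '' Metric.sphere 0 1) : D = interiorDomain h := by
  have hunion : h '' closedExterior = h '' {w | 1 < ‖w‖} ∪ h '' Metric.sphere 0 1 := by
    rw [← Set.image_union, closedExterior_eq_union]
  have hopen : IsPreconnected (h '' {w | 1 < ‖w‖}) :=
    (isPreconnected_setOf_norm_mem (by simp) isPreconnected_Ioi
      fun _ hρ => zero_lt_one.trans hρ).image h
      (H.analyticOnNhd.continuousOn.mono fun w (hw : 1 < ‖w‖) => hw.le)
  have hdisj : Disjoint (h '' {w | 1 < ‖w‖}) (h '' Metric.sphere 0 1) := by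
    rw [Set.disjoint_left]
    rintro _ ⟨w, hw, rfl⟩ ⟨w', hw', heq⟩
    have hw1 : 1 < ‖w‖ := hw
    have hw'1 : ‖w'‖ = 1 := mem_sphere_zero_iff_norm.mp hw'
    exact hw1.ne' (H.injOn hw1.le hw'1.ge heq.symm ▸ hw'1)
  have hunbdd : ¬ h '' {w | 1 < ‖w‖} ⊆ D := by
    intro hsub
    have hfar : ∀ᶠ w in cocompact ℂ, h w ∉ closure D :=
      H.tendsto_cocompact hDb.isCompact_closure.compl_mem_cocompact
    obtain ⟨w, hw, hw1⟩ := (hfar.and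
      ((tendsto_norm_cocompact_atTop (E := ℂ)).eventually_gt_atTop 1)).exists
    exact hw (subset_closure (hsub ⟨w, hw1, rfl⟩))
  rw [interiorDomain, hunion]
  exact eq_compl_of_frontier_eq hDo hDne hfr hopen hdisj hunbdd
    (hunion ▸ H.isPreconnected_interiorDomain)

end IsExteriorMap

end ExteriorMap

section Green

/-- The Wirtinger derivative `∂_{z̄} F = ½ (∂_x F + i ∂_y F)`. -/
noncomputable def dbar (F : ℂ → ℂ) (z : ℂ) : ℂ :=
  (1 / 2) * (fderiv ℝ F z 1 + I * fderiv ℝ F z I)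

variable {F G : ℂ → ℂ} {z : ℂ}

theorem realLinear_apply_eq (L : ℂ →L[ℝ] ℂ) (a : ℂ) : L a = a.re * L 1 + a.im * L I := by
  have ha : a = a.re • (1 : ℂ) + a.im • I := by simp [re_add_im]
  conv_lhs => rw [ha, map_add, map_smul, map_smul, real_smul, real_smul]

theorem dbar_comp_of_hasDerivAt {H : ℂ → ℂ} {H' : ℂ} (hF : DifferentiableAt ℝ F (H z))
    (hH : HasDerivAt H H' z) :
    dbar (fun s => F (H s)) z = (starRingEnd ℂ) H' * dbar F (H z) := by
  have hcomp := hF.hasFDerivAt.comp z (hH.hasFDerivAt.restrictScalars ℝ)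
  have hconj : (starRingEnd ℂ) H' = H'.re - H'.im * I := by apply Complex.ext <;> simp
  rw [dbar, dbar, show (fun s => F (H s)) = F ∘ H from rfl, hcomp.fderiv]
  simp only [ContinuousLinearMap.comp_apply, ContinuousLinearMap.coe_restrictScalars',
    ContinuousLinearMap.toSpanSingleton_apply, smul_eq_mul, one_mul]
  rw [realLinear_apply_eq _ H', realLinear_apply_eq _ (I * H'), hconj]
  simp only [mul_re, I_re, I_im, mul_im, zero_mul, one_mul, zero_sub, zero_add, ofReal_neg]
  linear_combination ((1 / 2) * H'.im * fderiv ℝ F (H z) I) * I_sq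

theorem dbar_mul (hF : DifferentiableAt ℝ F z) (hG : DifferentiableAt ℝ G z) :
    dbar (fun s => F s * G s) z = dbar F z * G z + F z * dbar G z := by
  rw [dbar, fderiv_fun_mul hF hG, dbar, dbar]
  simp only [_root_.add_apply, _root_.smul_apply, smul_eq_mul]
  ring

theorem dbar_eq_zero_of_differentiableAt (hF : DifferentiableAt ℂ F z) : dbar F z = 0 := by
  rw [dbar, (hF.hasDerivAt.hasFDerivAt.restrictScalars ℝ).fderiv]
  simp only [ContinuousLinearMap.coe_restrictScalars', ContinuousLinearMap.toSpanSingleton_apply,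
    smul_eq_mul, one_mul]
  linear_combination ((1 / 2) * deriv F z) * I_sq

theorem dbar_conj : dbar (starRingEnd ℂ) z = 1 := by
  rw [dbar, show (starRingEnd ℂ : ℂ → ℂ) = conjCLE from rfl, conjCLE.fderiv]
  simp only [ContinuousLinearEquiv.coe_coe, conjCLE_apply, map_one, conj_I]
  linear_combination -(1 / 2) * I_sq

theorem dbar_comp_mul_deriv {H : ℂ → ℂ} (hF : DifferentiableAt ℝ F (H z)) (hH : AnalyticAt ℂ H z) :
    dbar (fun s => F (H s) * deriv H s) z = normSq (deriv H z) • dbar F (H z) := by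
  have hH' := hH.differentiableAt.hasDerivAt
  have hFH : DifferentiableAt ℝ (fun s => F (H s)) z :=
    hF.comp z (hH.differentiableAt.restrictScalars ℝ)
  rw [dbar_mul hFH (hH.deriv.differentiableAt.restrictScalars ℝ),
    dbar_eq_zero_of_differentiableAt hH.deriv.differentiableAt, dbar_comp_of_hasDerivAt hF hH',
    real_smul, normSq_eq_conj_mul_self]
  ring

theorem continuousAt_dbar (hF : ContDiffAt ℝ 1 F z) : ContinuousAt (dbar F) z := by
  have hfderiv : ContinuousAt (fderiv ℝ F) z :=
    (hF.fderiv_right (m := 0) (by norm_num)).continuousAt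
  unfold dbar
  fun_prop

theorem continuous_dbar (hF : ContDiff ℝ 1 F) : Continuous (dbar F) :=
  continuous_iff_continuousAt.mpr fun _ => continuousAt_dbar hF.contDiffAt

theorem dbar_eq_zero_of_notMem_tsupport (hz : z ∉ tsupport F) : dbar F z = 0 := by
  have hfderiv : fderiv ℝ F z = 0 :=
    Function.notMem_support.mp fun h => hz (support_fderiv_subset ℝ h)
  simp [dbar, hfderiv]

theorem hasCompactSupport_dbar (hF : HasCompactSupport F) : HasCompactSupport (dbar F) :=
  HasCompactSupport.of_support_subset_isCompact hF fun _ hz =>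
    by_contra fun hzF => hz (dbar_eq_zero_of_notMem_tsupport hzF)

theorem setIntegral_reProdIm {f : ℂ → ℂ} {s t : Set ℝ} (hf : IntegrableOn f (s ×ℂ t)) :
    ∫ z in s ×ℂ t, f z = ∫ x in s, ∫ y in t, f (x + y * I) := by
  have hpre : measurableEquivRealProd.symm ⁻¹' (s ×ℂ t) = s ×ˢ t := by
    ext p
    simp [mem_reProdIm]
  have hmp := volume_preserving_equiv_real_prod.symm
  have hemb := measurableEquivRealProd.symm.measurableEmbedding
  rw [← hmp.integrableOn_comp_preimage hemb, hpre] at hf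
  rw [← hmp.setIntegral_preimage_emb hemb, hpre]
  refine (setIntegral_prod (fun p => f (measurableEquivRealProd.symm p)) hf).trans ?_
  simp only [measurableEquivRealProd_symm_apply, mk_eq_add_mul_I]

theorem setIntegral_image_eq_normSq_deriv_smul {f g : ℂ → ℂ} {f' : ℂ → ℂ} {s : Set ℂ}
    (hs : MeasurableSet s) (hf : ∀ z ∈ s, HasDerivWithinAt f (f' z) s z) (hinj : Set.InjOn f s) :
    ∫ z in f '' s, g z = ∫ z in s, normSq (f' z) • g (f z) := by
  rw [integral_image_eq_integral_abs_det_fderiv_smul volume hs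
    (fun z hz => (hf z hz).hasFDerivWithinAt.restrictScalars ℝ) hinj]
  simp [ContinuousLinearMap.det, LinearMap.det_restrictScalars, Algebra.norm_complex_eq,
    abs_of_nonneg (normSq_nonneg _)]

theorem exp_image_strip (T : ℝ) :
    exp '' (Set.Icc 0 T ×ℂ Set.Ioc (-Real.pi) Real.pi) =
      {w | 1 ≤ ‖w‖ ∧ ‖w‖ ≤ Real.exp T} := by
  ext w
  constructor
  · rintro ⟨s, hs, rfl⟩
    simpa [norm_exp] using hs.1
  · rintro ⟨hw1, hwT⟩
    have hw : 0 < ‖w‖ := zero_lt_one.trans_le hw1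
    refine ⟨log w, ⟨⟨?_, ?_⟩, neg_pi_lt_log_im w, log_im_le_pi w⟩, exp_log (norm_pos_iff.mp hw)⟩
    · exact log_re w ▸ Real.log_nonneg hw1
    · exact log_re w ▸ (Real.log_le_iff_le_exp hw).mpr hwT

theorem setIntegral_dbar_strip {T : ℝ} (hT : 0 ≤ T)
    (hG : ∀ s ∈ Set.Icc 0 T ×ℂ Set.Icc (-Real.pi) Real.pi, ContDiffAt ℝ 1 G s)
    (hper : ∀ s, G (s + 2 * Real.pi * I) = G s) (hzero : ∀ y : ℝ, G (T + y * I) = 0) :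
    ∫ s in Set.Icc 0 T ×ℂ Set.Ioc (-Real.pi) Real.pi, dbar G s =
      -(1 / 2) * ∫ y in (-Real.pi)..Real.pi, G (y * I) := by
  have hπ : -Real.pi ≤ Real.pi := by linarith [Real.pi_pos]
  have hint : IntegrableOn (dbar G) (Set.Icc 0 T ×ℂ Set.Icc (-Real.pi) Real.pi) :=
    ContinuousOn.integrableOn_compact (isCompact_Icc.reProdIm isCompact_Icc)
      fun s hs => (continuousAt_dbar (hG s hs)).continuousWithinAt
  have hboundary : ∀ s, I • fderiv ℝ G s 1 - fderiv ℝ G s I = 2 * I * dbar G s := fun s => by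
    rw [dbar, smul_eq_mul]
    linear_combination -fderiv ℝ G s I * I_sq
  have hrect := integral_boundary_rect_of_differentiableOn_real G
    (↑(0 : ℝ) + ↑(-Real.pi) * I) (↑T + ↑Real.pi * I)
  simp only [hboundary, add_re, ofReal_re, mul_re, I_re, mul_zero, ofReal_im, I_im, mul_one,
    sub_self, add_zero, add_im, mul_im, zero_add, Set.uIcc_of_le hT, Set.uIcc_of_le hπ] at hrect
  specialize hrect
    (fun s hs => ((hG s hs).differentiableAt one_ne_zero).differentiableWithinAt)
    (hint.const_mul _)
  have hbottom : ∀ x : ℝ, G (x + ↑(-Real.pi) * I) = G (x + Real.pi * I) := fun x => by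
    rw [← hper]
    congr 1
    push_cast
    ring
  simp only [hbottom, hzero, sub_self, intervalIntegral.integral_zero, ofReal_zero,
    zero_add, intervalIntegral.integral_const_mul, smul_eq_mul] at hrect
  have hsub : Set.Icc 0 T ×ℂ Set.Ioc (-Real.pi) Real.pi ⊆
      Set.Icc 0 T ×ℂ Set.Icc (-Real.pi) Real.pi :=
    reProdIm_subset_iff'.mpr (.inl ⟨subset_rfl, Set.Ioc_subset_Icc_self⟩)
  rw [setIntegral_reProdIm (hint.mono_set hsub),
    integral_Icc_eq_integral_Ioc, ← intervalIntegral.integral_of_le hT]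
  simp only [← intervalIntegral.integral_of_le hπ]
  refine mul_left_cancel₀ (show (2 * I : ℂ) ≠ 0 by simp) (hrect.symm.trans ?_)
  ring

end Green

section GreenExterior

variable {h F : ℂ → ℂ} {r : ℂ}

theorem circleIntegral_eq_intervalIntegral_comp_exp (f : ℂ → ℂ) :
    ∮ w in C(0, 1), f w = I * ∫ y in (-Real.pi)..Real.pi, f (exp (y * I)) * exp (y * I) := by
  have hper : Function.Periodic (fun y : ℝ => f (exp (y * I)) * exp (y * I)) (2 * Real.pi) :=
    fun y => by
      have hexp : exp (↑(y + 2 * Real.pi) * I) = exp (y * I) := by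
        rw [← exp_periodic (y * I)]
        congr 1
        push_cast
        ring
      simp only [hexp]
  have hshift := hper.intervalIntegral_add_eq (-Real.pi) 0
  rw [show -Real.pi + 2 * Real.pi = Real.pi by ring, zero_add] at hshift
  rw [hshift, circleIntegral, ← intervalIntegral.integral_const_mul]
  simp only [circleMap, deriv_circleMap, smul_eq_mul, ofReal_one, one_mul, zero_add]
  exact intervalIntegral.integral_congr fun y _ => by ring

theorem exists_strip_height (hh : Tendsto h (cocompact ℂ) (cocompact ℂ)) {K : Set ℂ}
    (hK : IsCompact K) : ∃ T : ℝ, 0 ≤ T ∧ ∀ w, Real.exp T ≤ ‖w‖ → h w ∉ K := by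
  have hfar : ∀ᶠ w in cobounded ℂ, h w ∉ K := by
    rw [Metric.cobounded_eq_cocompact]
    exact hh hK.compl_mem_cocompact
  obtain ⟨M, -, hM⟩ := hasBasis_cobounded_norm.eventually_iff.mp hfar
  obtain ⟨T, hT, hTM⟩ := ((eventually_ge_atTop 0).and
    (Real.tendsto_exp_atTop.eventually_ge_atTop M)).exists
  exact ⟨T, hT, fun w hw => hM (hTM.trans hw)⟩

theorem exp_mem_closedExterior {s : ℂ} (hs : 0 ≤ s.re) : exp s ∈ closedExterior := by
  simpa [norm_exp] using hs

namespace IsExteriorMap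

theorem analyticAt_comp_exp (H : IsExteriorMap h r) {s : ℂ} (hs : 0 ≤ s.re) :
    AnalyticAt ℂ (fun s => h (exp s)) s :=
  (H.analyticOnNhd _ (exp_mem_closedExterior hs)).comp analyticAt_cexp

theorem injOn_comp_exp (H : IsExteriorMap h r) (T : ℝ) :
    Set.InjOn (fun s => h (exp s)) (Set.Icc 0 T ×ℂ Set.Ioc (-Real.pi) Real.pi) :=
  fun _ hs _ hs' heq => exp_inj_of_neg_pi_lt_of_le_pi hs.2.1 hs.2.2 hs'.2.1 hs'.2.2
    (H.injOn (exp_mem_closedExterior hs.1.1) (exp_mem_closedExterior hs'.1.1) heq)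

theorem setIntegral_dbar_comp_exp (H : IsExteriorMap h r) (hF : ContDiff ℝ 1 F) {T : ℝ}
    (hT : 0 ≤ T) (hfar : ∀ w, Real.exp T ≤ ‖w‖ → F (h w) = 0) :
    ∫ s in Set.Icc 0 T ×ℂ Set.Ioc (-Real.pi) Real.pi,
        dbar (fun s => F (h (exp s)) * deriv (fun s => h (exp s)) s) s =
      -((2 * I)⁻¹ * ∮ w in C(0, 1), F (h w) * deriv h w) := by
  have hperiodic : ∀ s, h (exp (s + 2 * Real.pi * I)) = h (exp s) := fun s => by
    rw [exp_periodic]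
  have hderiv : ∀ y : ℝ, deriv (fun s => h (exp s)) (y * I) =
      deriv h (exp (y * I)) * exp (y * I) := fun y =>
    ((H.differentiableAt (exp_mem_closedExterior (by simp))).hasDerivAt.comp _
      (hasDerivAt_exp _)).deriv
  rw [setIntegral_dbar_strip (G := fun s => F (h (exp s)) * deriv (fun s => h (exp s)) s) hT
    (fun s hs => (hF.contDiffAt.comp s
      ((H.analyticAt_comp_exp hs.1.1).contDiffAt.restrict_scalars ℝ)).mul
      ((H.analyticAt_comp_exp hs.1.1).deriv.contDiffAt.restrict_scalars ℝ))
    (fun s => by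
      rw [hperiodic, ← deriv_comp_add_const]
      simp only [hperiodic])
    (fun y => by rw [hfar _ (by simp [norm_exp]), zero_mul]),
    circleIntegral_eq_intervalIntegral_comp_exp]
  simp only [hderiv, mul_assoc]
  rw [mul_inv, mul_assoc, inv_mul_cancel_left₀ I_ne_zero]
  ring

theorem setIntegral_image_dbar (H : IsExteriorMap h r) (hF : ContDiff ℝ 1 F)
    (hFc : HasCompactSupport F) :
    ∫ z in h '' closedExterior, dbar F z =
      -((2 * I)⁻¹ * ∮ w in C(0, 1), F (h w) * deriv h w) := by
  obtain ⟨T, hT, hfar⟩ := exists_strip_height H.tendsto_cocompact hFc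
  set S : Set ℂ := Set.Icc 0 T ×ℂ Set.Ioc (-Real.pi) Real.pi
  have hSmeas : MeasurableSet S :=
    (measurable_re measurableSet_Icc).inter (measurable_im measurableSet_Ioc)
  have hsub : (fun s => h (exp s)) '' S ⊆ h '' closedExterior := by
    rintro _ ⟨s, hs, rfl⟩
    exact ⟨exp s, exp_mem_closedExterior hs.1.1, rfl⟩
  have houtside : ∀ z ∈ h '' closedExterior \ (fun s => h (exp s)) '' S, dbar F z = 0 := by
    rintro _ ⟨⟨w, hw, rfl⟩, hwS⟩
    refine dbar_eq_zero_of_notMem_tsupport (hfar w (not_lt.mp fun hwT => hwS ?_))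
    obtain ⟨s, hs, rfl⟩ := (exp_image_strip T).ge ⟨hw, hwT.le⟩
    exact ⟨s, hs, rfl⟩
  calc ∫ z in h '' closedExterior, dbar F z
      = ∫ z in (fun s => h (exp s)) '' S, dbar F z :=
        setIntegral_eq_of_subset_of_forall_sdiff_eq_zero H.isClosed_image.measurableSet hsub
          houtside
    _ = ∫ s in S, normSq (deriv (fun s => h (exp s)) s) • dbar F (h (exp s)) :=
        setIntegral_image_eq_normSq_deriv_smul hSmeas (fun s hs =>
          (H.analyticAt_comp_exp hs.1.1).differentiableAt.hasDerivAt.hasDerivWithinAt)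
          (H.injOn_comp_exp T)
    _ = ∫ s in S, dbar (fun s => F (h (exp s)) * deriv (fun s => h (exp s)) s) s :=
        setIntegral_congr_fun hSmeas fun s hs => (dbar_comp_mul_deriv
          (hF.differentiable one_ne_zero _) (H.analyticAt_comp_exp hs.1.1)).symm
    _ = -((2 * I)⁻¹ * ∮ w in C(0, 1), F (h w) * deriv h w) :=
        H.setIntegral_dbar_comp_exp hF hT fun w hw =>
          image_eq_zero_of_notMem_tsupport (hfar w hw)

end IsExteriorMap

theorem integral_dbar_eq_zero (hF : ContDiff ℝ 1 F) (hFc : HasCompactSupport F) :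
    ∫ z, dbar F z = 0 := by
  have hcont := hF.continuous_fderiv one_ne_zero
  have hint : ∀ v : ℂ, Integrable fun z => fderiv ℝ F z v := fun v =>
    (hcont.clm_apply continuous_const).integrable_of_hasCompactSupport (hFc.fderiv_apply ℝ v)
  have hzero : ∀ v : ℂ, ∫ z, fderiv ℝ F z v = 0 := fun v => by
    simpa using integral_mul_fderiv_eq_neg_fderiv_mul_of_integrable (𝕜 := ℂ) (μ := volume)
      (f := fun _ : ℂ => (1 : ℂ)) (g := F) (v := v) (by simp) (by simpa using hint v)
      (by simpa using hF.continuous.integrable_of_hasCompactSupport hFc)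
      (fun _ _ => differentiableAt_const _) (fun _ _ => hF.differentiable one_ne_zero _)
  unfold dbar
  rw [integral_const_mul, integral_add (hint 1) ((hint I).const_mul I), integral_const_mul,
    hzero, hzero]
  simp

theorem exists_contDiff_hasCompactSupport_eqOn {B : Set ℂ} (hB : IsBounded B)
    (hF : ContDiff ℝ 1 F) :
    ∃ F₀ : ℂ → ℂ, ContDiff ℝ 1 F₀ ∧ HasCompactSupport F₀ ∧ ∀ z ∈ B, F₀ =ᶠ[𝓝 z] F := by
  obtain ⟨M, hM0, hM⟩ := hB.subset_ball_lt 0 0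
  let χ : ContDiffBump (0 : ℂ) := ⟨M, M + 1, hM0, by linarith⟩
  refine ⟨fun z => χ z • F z, χ.contDiff.smul hF, χ.hasCompactSupport.smul_right, fun z hz => ?_⟩
  filter_upwards [Metric.isOpen_ball.mem_nhds (hM hz)] with y hy
  rw [χ.one_of_mem_closedBall (Metric.ball_subset_closedBall hy), one_smul]

namespace IsExteriorMap

theorem isOpen_interiorDomain (H : IsExteriorMap h r) : IsOpen (interiorDomain h) :=
  H.isClosed_image.isOpen_compl

theorem isBounded_image_sphere (H : IsExteriorMap h r) : IsBounded (h '' Metric.sphere 0 1) :=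
  ((isCompact_sphere 0 1).image_of_continuousOn H.continuousOn_sphere).isBounded

theorem isOpen_image_setOf_one_lt_norm (H : IsExteriorMap h r) :
    IsOpen (h '' {w | 1 < ‖w‖}) := by
  refine isOpen_iff_mem_nhds.mpr ?_
  rintro _ ⟨w, hw : 1 < ‖w‖, rfl⟩
  rw [← H.isLocalHomeomorphOn.map_nhds_eq (show w ∈ closedExterior from hw.le)]
  exact image_mem_map ((isOpen_lt continuous_const continuous_norm).mem_nhds hw)

theorem isBounded_interiorDomain (H : IsExteriorMap h r) : IsBounded (interiorDomain h) := by
  obtain ⟨M, hM0, hM⟩ := H.isBounded_image_sphere.subset_closedBall_lt 0 0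
  have hnorm := tendsto_norm_cocompact_atTop (E := ℂ)
  obtain ⟨w, hwM, hw⟩ := (((hnorm.comp H.tendsto_cocompact).eventually_gt_atTop M).and
    (hnorm.eventually_gt_atTop 1)).exists
  have hsub : {z | ‖z‖ ∈ Set.Ioi M} ⊆ h '' {w | 1 < ‖w‖} := by
    refine (isPreconnected_setOf_norm_mem (by simp) isPreconnected_Ioi
      fun _ hρ => hM0.trans hρ).subset_of_closure_inter_subset H.isOpen_image_setOf_one_lt_norm
        ⟨h w, hwM, w, hw, rfl⟩ fun z ⟨hzcl, hzM⟩ => ?_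
    have hz : z ∈ h '' closedExterior := closure_minimal
      (Set.image_mono fun w (hw : 1 < ‖w‖) => hw.le) H.isClosed_image hzcl
    rw [closedExterior_eq_union, Set.image_union] at hz
    exact hz.resolve_right fun hzs => hzM.not_ge (mem_closedBall_zero_iff.mp (hM hzs))
  refine (Metric.isBounded_closedBall (x := 0) (r := M)).subset
    (Set.compl_subset_comm.mp fun z hz => ?_)
  obtain ⟨w, hw, rfl⟩ := hsub (not_le.mp (mem_closedBall_zero_iff.not.mp hz))
  exact ⟨w, (show 1 < ‖w‖ from hw).le, rfl⟩

theorem setIntegral_interiorDomain_dbar (H : IsExteriorMap h r) (hF : ContDiff ℝ 1 F) :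
    ∫ z in interiorDomain h, dbar F z = (2 * I)⁻¹ * ∮ w in C(0, 1), F (h w) * deriv h w := by
  obtain ⟨F₀, hF₀, hF₀c, heq⟩ := exists_contDiff_hasCompactSupport_eqOn
    (H.isBounded_interiorDomain.union H.isBounded_image_sphere) hF
  have hdbar : ∫ z in interiorDomain h, dbar F z = ∫ z in interiorDomain h, dbar F₀ z :=
    setIntegral_congr_fun H.isOpen_interiorDomain.measurableSet fun z hz => by
      rw [dbar, dbar, (heq z (.inl hz)).fderiv_eq]
  have hcontour : ∮ w in C(0, 1), F (h w) * deriv h w = ∮ w in C(0, 1), F₀ (h w) * deriv h w :=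
    circleIntegral.integral_congr zero_le_one fun w hw => by
      simp only [(heq (h w) (.inr ⟨w, hw, rfl⟩)).eq_of_nhds]
  have hsum := integral_add_compl (μ := volume) H.isClosed_image.measurableSet
    ((continuous_dbar hF₀).integrable_of_hasCompactSupport (hasCompactSupport_dbar hF₀c))
  rw [integral_dbar_eq_zero hF₀ hF₀c, H.setIntegral_image_dbar hF₀ hF₀c] at hsum
  rw [hdbar, hcontour, interiorDomain]
  linear_combination hsum

end IsExteriorMap

end GreenExterior

section LocalIntegrability

theorem integrableOn_comp_sub_of_isBounded {E F : Type*} [NormedAddCommGroup E] [ProperSpace E]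
    [MeasurableSpace E] [BorelSpace E] [NormedAddCommGroup F] {μ : Measure E}
    [μ.IsAddRightInvariant] {f : E → F} (hf : LocallyIntegrable f μ) {D : Set E}
    (hD : IsBounded D) (z : E) : IntegrableOn (fun ζ => f (ζ - z)) D μ := by
  obtain ⟨M, hM⟩ := hD.subset_closedBall z
  have hball := hf.integrableOn_isCompact (isCompact_closedBall 0 M)
  rw [← (measurePreserving_sub_right μ z).integrableOn_comp_preimage
    (measurableEmbedding_subRight z)] at hball
  exact hball.mono_set fun ζ hζ => by simpa [dist_eq_norm] using hM hζ

theorem locallyIntegrable_inv : LocallyIntegrable fun u : ℂ => u⁻¹ :=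
  locallyIntegrable_of_norm_le_rpow (C := 1) (α := 1) (by simp) (by simp)
    (ae_of_all _ fun u => by simp [Real.rpow_neg_one]) (by fun_prop)

theorem locallyIntegrable_log_norm : LocallyIntegrable fun u : ℂ => Real.log ‖u‖ := by
  refine locallyIntegrable_iff.mpr fun K hK => ?_
  obtain ⟨M, -, hM⟩ := hK.isBounded.subset_ball_lt 0 0
  refine IntegrableOn.mono_set ((integrableOn_fun_norm_addHaar volume).mpr ?_) hM
  have hint : IntegrableOn (fun y => y * Real.log y) (Set.Icc 0 M) :=
    Real.continuous_mul_log.continuousOn.integrableOn_compact isCompact_Icc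
  simpa using hint.mono_set Set.Ioo_subset_Icc_self

end LocalIntegrability

section CauchyTransform

/-- The Cauchy transform `z ↦ ∫_D dA(ζ) / (ζ - z)` of the area measure of `D`. -/
noncomputable def cauchyTransform (D : Set ℂ) (z : ℂ) : ℂ := ∫ ζ in D, (ζ - z)⁻¹

/-- A smooth approximation, as `δ → 0`, of `u ↦ conj u / u`, whose `dbar` derivative is the Cauchy
kernel `u⁻¹`. -/
noncomputable def regularizedKernel (δ : ℝ) (u : ℂ) : ℂ :=
  (starRingEnd ℂ) u ^ 2 / (u * (starRingEnd ℂ) u + δ)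

variable {δ : ℝ} {u : ℂ}

theorem norm_mul_conj_add (hδ : 0 ≤ δ) : ‖u * (starRingEnd ℂ) u + δ‖ = ‖u‖ ^ 2 + δ := by
  rw [mul_conj, normSq_eq_norm_sq, ← ofReal_add, Complex.norm_of_nonneg (by positivity)]

theorem mul_conj_add_ne_zero (hδ : 0 < δ) : u * (starRingEnd ℂ) u + δ ≠ 0 := by
  rw [← norm_ne_zero_iff, norm_mul_conj_add hδ.le]
  positivity

theorem contDiff_regularizedKernel (hδ : 0 < δ) : ContDiff ℝ 1 (regularizedKernel δ) := by
  have hconj : ContDiff ℝ 1 (starRingEnd ℂ) := conjCLE.contDiff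
  exact (hconj.pow 2).mul (((contDiff_id.mul hconj).add contDiff_const).inv
    fun _ => mul_conj_add_ne_zero hδ)

theorem norm_regularizedKernel_le (hδ : 0 ≤ δ) : ‖regularizedKernel δ u‖ ≤ 1 := by
  rw [regularizedKernel, norm_div, norm_mul_conj_add hδ, norm_pow, RCLike.norm_conj]
  exact div_le_one_of_le₀ (by linarith) (by positivity)

theorem dbar_regularizedKernel (hδ : 0 < δ) :
    dbar (regularizedKernel δ) u =
      (2 * (starRingEnd ℂ) u - regularizedKernel δ u * u) / (u * (starRingEnd ℂ) u + δ) := by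
  have hconj : Differentiable ℝ (starRingEnd ℂ) := conjCLE.differentiable
  have hden : Differentiable ℝ fun u : ℂ => u * (starRingEnd ℂ) u + δ :=
    (differentiable_id.mul hconj).add_const _
  have hmul : (fun u => regularizedKernel δ u * (u * (starRingEnd ℂ) u + δ)) =
      fun u => (starRingEnd ℂ) u * (starRingEnd ℂ) u := funext fun u => by
    rw [regularizedKernel, div_mul_cancel₀ _ (mul_conj_add_ne_zero hδ), sq]
  have hdbarden : dbar (fun u : ℂ => u * (starRingEnd ℂ) u + δ) u = u := by
    have hconst : dbar (fun u : ℂ => u * (starRingEnd ℂ) u + δ) u =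
        dbar (fun u : ℂ => u * (starRingEnd ℂ) u) u := by
      simp only [dbar, fderiv_add_const]
    rw [hconst, dbar_mul differentiableAt_fun_id (hconj u),
      dbar_eq_zero_of_differentiableAt differentiableAt_fun_id, dbar_conj]
    ring
  have hdbar := congrArg (dbar · u) hmul
  simp only [dbar_mul ((contDiff_regularizedKernel hδ).differentiable one_ne_zero u) (hden u),
    dbar_mul (hconj u) (hconj u), dbar_conj, hdbarden] at hdbar
  rw [eq_div_iff (mul_conj_add_ne_zero hδ)]
  linear_combination hdbar

theorem norm_dbar_regularizedKernel_le (hδ : 0 < δ) :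
    ‖dbar (regularizedKernel δ) u‖ ≤ 3 * ‖u‖⁻¹ := by
  rcases eq_or_ne u 0 with rfl | hu
  · simp [dbar_regularizedKernel hδ]
  have hu : 0 < ‖u‖ := norm_pos_iff.mpr hu
  rw [dbar_regularizedKernel hδ, norm_div, norm_mul_conj_add hδ.le, ← div_eq_mul_inv,
    div_le_div_iff₀ (by positivity) hu]
  have hnum : ‖2 * (starRingEnd ℂ) u - regularizedKernel δ u * u‖ ≤ 3 * ‖u‖ :=
    calc ‖2 * (starRingEnd ℂ) u - regularizedKernel δ u * u‖
        ≤ ‖2 * (starRingEnd ℂ) u‖ + ‖regularizedKernel δ u * u‖ := norm_sub_le _ _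
      _ = 2 * ‖u‖ + ‖regularizedKernel δ u‖ * ‖u‖ := by simp
      _ ≤ 2 * ‖u‖ + 1 * ‖u‖ := by gcongr; exact norm_regularizedKernel_le hδ.le
      _ = 3 * ‖u‖ := by ring
  nlinarith

theorem tendsto_regularizedKernel (u : ℂ) :
    Tendsto (fun δ => regularizedKernel δ u) (𝓝[>] 0) (𝓝 ((starRingEnd ℂ) u / u)) := by
  rcases eq_or_ne u 0 with rfl | hu
  · simp [regularizedKernel]
  have hcont : ContinuousAt (fun δ : ℝ => regularizedKernel δ u) 0 := by
    have hne : u * (starRingEnd ℂ) u + (0 : ℝ) ≠ 0 := by simp [hu]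
    unfold regularizedKernel
    fun_prop (disch := assumption)
  have hlim := hcont.tendsto.mono_left (nhdsWithin_le_nhds (s := Set.Ioi 0))
  rwa [regularizedKernel, ofReal_zero, add_zero, sq, mul_div_mul_right _ _ (by simpa)] at hlim

theorem tendsto_dbar_regularizedKernel (u : ℂ) :
    Tendsto (fun δ => dbar (regularizedKernel δ) u) (𝓝[>] 0) (𝓝 u⁻¹) := by
  rcases eq_or_ne u 0 with rfl | hu
  · exact tendsto_const_nhds.congr' (eventually_mem_nhdsWithin.mono fun δ hδ => by
      simp [dbar_regularizedKernel hδ])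
  have hconj : (starRingEnd ℂ) u ≠ 0 := by simpa
  have hvalue : (2 * (starRingEnd ℂ) u - (starRingEnd ℂ) u / u * u) /
      (u * (starRingEnd ℂ) u + (0 : ℝ)) = u⁻¹ := by
    rw [ofReal_zero]
    field_simp
    ring
  have hden : Tendsto (fun δ : ℝ => u * (starRingEnd ℂ) u + δ) (𝓝[>] 0)
      (𝓝 (u * (starRingEnd ℂ) u + (0 : ℝ))) :=
    ((continuous_const.add continuous_ofReal).tendsto 0).mono_left nhdsWithin_le_nhds
  have hlim := (((tendsto_regularizedKernel u).mul_const u).const_sub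
    (2 * (starRingEnd ℂ) u)).div hden (by simp [hu])
  rw [hvalue] at hlim
  exact hlim.congr' (eventually_mem_nhdsWithin.mono fun δ hδ => (dbar_regularizedKernel hδ).symm)

theorem dbar_comp_sub (F : ℂ → ℂ) (z ζ : ℂ) : dbar (fun ζ => F (ζ - z)) ζ = dbar F (ζ - z) := by
  simp only [dbar, fderiv_comp_sub]

theorem tendsto_circleIntegral_of_dominated {ι : Type*} {l : Filter ι} [l.IsCountablyGenerated]
    {f : ι → ℂ → ℂ} {g : ℂ → ℂ} {c : ℂ} {R : ℝ} (bound : ℂ → ℝ) (hR : 0 ≤ R)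
    (hf : ∀ᶠ n in l, ContinuousOn (f n) (Metric.sphere c R))
    (hbound : ∀ᶠ n in l, ∀ w ∈ Metric.sphere c R, ‖f n w‖ ≤ bound w)
    (hcont : ContinuousOn bound (Metric.sphere c R))
    (hlim : ∀ w ∈ Metric.sphere c R, Tendsto (fun n => f n w) l (𝓝 (g w))) :
    Tendsto (fun n => ∮ w in C(c, R), f n w) l (𝓝 (∮ w in C(c, R), g w)) := by
  have hmem : ∀ θ, circleMap c R θ ∈ Metric.sphere c R := circleMap_mem_sphere c hR
  have hcomp : ∀ {E : Type} [TopologicalSpace E] {q : ℂ → E},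
      ContinuousOn q (Metric.sphere c R) → Continuous fun θ => q (circleMap c R θ) := fun hq =>
    continuousOn_univ.mp (hq.comp (continuous_circleMap c R).continuousOn fun θ _ => hmem θ)
  refine intervalIntegral.tendsto_integral_filter_of_dominated_convergence
    (fun θ => R * bound (circleMap c R θ)) ?_ ?_ ?_ ?_
  · filter_upwards [hf] with n hn
    simp only [deriv_circleMap]
    exact (((continuous_circleMap 0 R).mul continuous_const).smul
      (hcomp hn)).aestronglyMeasurable
  · filter_upwards [hbound] with n hn
    refine ae_of_all _ fun θ _ => ?_
    rw [norm_smul, deriv_circleMap, norm_mul, norm_I, mul_one, norm_circleMap_zero,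
      abs_of_nonneg hR]
    exact mul_le_mul_of_nonneg_left (hn _ (hmem θ)) hR
  · exact (continuous_const.mul (hcomp hcont)).intervalIntegrable _ _
  · exact ae_of_all _ fun θ _ => (hlim _ (hmem θ)).const_smul _

theorem IsExteriorMap.cauchyTransform_interiorDomain {h : ℂ → ℂ} {r : ℂ} (H : IsExteriorMap h r)
    (z : ℂ) : cauchyTransform (interiorDomain h) z =
      (2 * I)⁻¹ * ∮ w in C(0, 1), (starRingEnd ℂ) (h w - z) / (h w - z) * deriv h w := by
  have hgreen : ∀ δ ∈ Set.Ioi (0 : ℝ),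
      ∫ ζ in interiorDomain h, dbar (regularizedKernel δ) (ζ - z) =
        (2 * I)⁻¹ * ∮ w in C(0, 1), regularizedKernel δ (h w - z) * deriv h w := fun δ hδ => by
    simpa only [dbar_comp_sub] using H.setIntegral_interiorDomain_dbar
      (F := fun ζ => regularizedKernel δ (ζ - z))
      ((contDiff_regularizedKernel hδ).comp (contDiff_id.sub contDiff_const))
  have harea : Tendsto (fun δ => ∫ ζ in interiorDomain h, dbar (regularizedKernel δ) (ζ - z))
      (𝓝[>] 0) (𝓝 (cauchyTransform (interiorDomain h) z)) := by
    refine tendsto_integral_filter_of_dominated_convergence (fun ζ => 3 * ‖(ζ - z)⁻¹‖) ?_ ?_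
      ((integrableOn_comp_sub_of_isBounded locallyIntegrable_inv H.isBounded_interiorDomain
        z).norm.const_mul 3) (ae_of_all _ fun ζ => tendsto_dbar_regularizedKernel _)
    · exact eventually_mem_nhdsWithin.mono fun δ hδ =>
        ((continuous_dbar (contDiff_regularizedKernel hδ)).comp
          (continuous_id.sub continuous_const)).aestronglyMeasurable
    · exact eventually_mem_nhdsWithin.mono fun δ hδ => ae_of_all _ fun ζ => by
        simpa only [norm_inv] using norm_dbar_regularizedKernel_le hδ
  have hcontour : Tendsto
      (fun δ => ∮ w in C(0, 1), regularizedKernel δ (h w - z) * deriv h w) (𝓝[>] 0)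
      (𝓝 (∮ w in C(0, 1), (starRingEnd ℂ) (h w - z) / (h w - z) * deriv h w)) := by
    refine tendsto_circleIntegral_of_dominated (fun w => ‖deriv h w‖) zero_le_one ?_ ?_
      H.continuousOn_deriv_sphere.norm fun w _ => (tendsto_regularizedKernel _).mul_const _
    · exact eventually_mem_nhdsWithin.mono fun δ hδ =>
        ((contDiff_regularizedKernel hδ).continuous.comp_continuousOn
          (H.continuousOn_sphere.sub continuousOn_const)).mul H.continuousOn_deriv_sphere
    · refine eventually_mem_nhdsWithin.mono fun δ hδ w _ => ?_
      rw [norm_mul]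
      exact mul_le_of_le_one_left (norm_nonneg _) (norm_regularizedKernel_le (le_of_lt hδ))
  exact tendsto_nhds_unique harea ((hcontour.const_mul _).congr'
    (eventually_mem_nhdsWithin.mono fun δ hδ => (hgreen δ hδ).symm))

end CauchyTransform

section LogPotential

/-- The logarithmic potential `z ↦ ∫_D log |ζ - z| dA(ζ)` of the area measure of `D`. -/
noncomputable def logPotential (D : Set ℂ) (z : ℂ) : ℝ := ∫ ζ in D, Real.log ‖ζ - z‖

/-- The real functional `v ↦ Re (c v)`, which is the differential of a real function `f` on the
plane with `2 ∂f = c`. -/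
noncomputable def reMul : ℂ →L[ℝ] ℂ →L[ℝ] ℝ :=
  (ContinuousLinearMap.compL ℝ ℂ ℂ ℝ reCLM).comp (ContinuousLinearMap.mul ℝ ℂ)

@[simp]
theorem reMul_apply (c v : ℂ) : reMul c v = (c * v).re := rfl

/-- A bounded approximation, as `δ → 0`, of the Cauchy kernel `u⁻¹`. -/
noncomputable def regularizedInv (δ : ℝ) (u : ℂ) : ℂ :=
  (starRingEnd ℂ) u / (u * (starRingEnd ℂ) u + δ)

variable {δ : ℝ} {u z : ℂ} {D : Set ℂ}

theorem hasFDerivAt_log_norm_sq_add (hδ : 0 < δ) (u : ℂ) :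
    HasFDerivAt (fun u => Real.log (‖u‖ ^ 2 + δ) / 2) (reMul (regularizedInv δ u)) u := by
  have hlog := (((hasStrictFDerivAt_norm_sq u).hasFDerivAt.add_const δ).log
    (by positivity)).mul_const (2⁻¹ : ℝ)
  simp only [← div_eq_mul_inv] at hlog
  refine hlog.congr_fderiv (ContinuousLinearMap.ext fun v => ?_)
  have hden : u * (starRingEnd ℂ) u + δ = (‖u‖ ^ 2 + δ : ℝ) := by
    rw [mul_conj, normSq_eq_norm_sq, ofReal_add]
  rw [reMul_apply, regularizedInv, hden, div_mul_eq_mul_div, div_ofReal_re]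
  simp only [smul_apply, coe_innerSL_apply, Complex.inner, mul_re, conj_re, conj_im, mul_neg,
    sub_neg_eq_add, smul_add, nsmul_eq_mul, Nat.cast_ofNat, smul_eq_mul, neg_mul]
  ring

theorem continuous_regularizedInv (hδ : 0 < δ) : Continuous (regularizedInv δ) :=
  continuous_conj.div₀ (by fun_prop) fun _ => mul_conj_add_ne_zero hδ

theorem norm_regularizedInv_le (hδ : 0 < δ) (u : ℂ) : ‖regularizedInv δ u‖ ≤ (√δ)⁻¹ := by
  rw [regularizedInv, norm_div, norm_mul_conj_add hδ.le, RCLike.norm_conj, ← one_div,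
    div_le_div_iff₀ (by positivity) (by positivity)]
  nlinarith [Real.sq_sqrt hδ.le, sq_nonneg (‖u‖ - √δ), sq_nonneg ‖u‖]

theorem norm_inv_sub_regularizedInv (hδ : 0 < δ) (u : ℂ) :
    ‖u⁻¹ - regularizedInv δ u‖ = δ / (‖u‖ * (‖u‖ ^ 2 + δ)) := by
  rcases eq_or_ne u 0 with rfl | hu
  · simp [regularizedInv]
  have hden := mul_conj_add_ne_zero (u := u) hδ
  have hsub : u⁻¹ - regularizedInv δ u = δ / (u * (u * (starRingEnd ℂ) u + δ)) := by
    rw [regularizedInv]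
    field_simp
    ring
  rw [hsub, norm_div, norm_mul, norm_mul_conj_add hδ.le, Complex.norm_of_nonneg hδ.le]

theorem integrable_inv_norm_mul_norm_sq_add_one :
    Integrable fun u : ℂ => 1 / (‖u‖ * (‖u‖ ^ 2 + 1)) := by
  refine (integrable_fun_norm_addHaar volume (f := fun x => 1 / (x * (x ^ 2 + 1)))).mpr
    (integrable_inv_one_add_sq.integrableOn.congr_fun (fun x (hx : 0 < x) => ?_)
      measurableSet_Ioi)
  simp only [finrank_real_complex, Nat.add_one_sub_one, pow_one, one_div, mul_inv_rev, smul_eq_mul]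
  field_simp
  ring

theorem div_norm_mul_le (hδ : δ ∈ Set.Ioc 0 1) (u : ℂ) :
    δ / (‖u‖ * (‖u‖ ^ 2 + δ)) ≤ 1 / (‖u‖ * (‖u‖ ^ 2 + 1)) := by
  rcases eq_or_ne u 0 with rfl | hu
  · simp
  have hu : 0 < ‖u‖ := norm_pos_iff.mpr hu
  have hδ0 := hδ.1
  rw [div_le_div_iff₀ (by positivity) (by positivity)]
  nlinarith [mul_le_mul_of_nonneg_right hδ.2 (pow_nonneg hu.le 3)]

theorem integrable_regularization_error (hδ : δ ∈ Set.Ioc 0 1) :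
    Integrable fun u : ℂ => δ / (‖u‖ * (‖u‖ ^ 2 + δ)) := by
  have hδ0 := hδ.1
  refine integrable_inv_norm_mul_norm_sq_add_one.mono'
    (by fun_prop : Measurable _).aestronglyMeasurable (ae_of_all _ fun u => ?_)
  rw [Real.norm_of_nonneg (by positivity)]
  exact div_norm_mul_le hδ u

theorem tendsto_integral_regularization_error :
    Tendsto (fun δ : ℝ => ∫ u : ℂ, δ / (‖u‖ * (‖u‖ ^ 2 + δ))) (𝓝[>] 0) (𝓝 0) := by
  have hpointwise : ∀ u : ℂ, u ≠ 0 →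
      Tendsto (fun δ : ℝ => δ / (‖u‖ * (‖u‖ ^ 2 + δ))) (𝓝[>] 0) (𝓝 0) := fun u hu => by
    have hcont : ContinuousAt (fun δ : ℝ => δ / (‖u‖ * (‖u‖ ^ 2 + δ))) 0 := by
      have : ‖u‖ * (‖u‖ ^ 2 + 0) ≠ 0 := by simpa
      fun_prop (disch := assumption)
    simpa using hcont.tendsto.mono_left nhdsWithin_le_nhds
  suffices hlim : Tendsto (fun δ : ℝ => ∫ u : ℂ, δ / (‖u‖ * (‖u‖ ^ 2 + δ))) (𝓝[>] 0)
      (𝓝 (∫ _ : ℂ, (0 : ℝ))) by rwa [integral_zero] at hlim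
  refine tendsto_integral_filter_of_dominated_convergence _ ?_ ?_
    integrable_inv_norm_mul_norm_sq_add_one ?_
  · filter_upwards [Ioc_mem_nhdsGT (zero_lt_one' ℝ)] with δ hδ
    exact (integrable_regularization_error hδ).aestronglyMeasurable
  · filter_upwards [Ioc_mem_nhdsGT (zero_lt_one' ℝ)] with δ hδ
    refine ae_of_all _ fun u => ?_
    have hδ0 := hδ.1
    rw [Real.norm_of_nonneg (by positivity)]
    exact div_norm_mul_le hδ u
  · filter_upwards [Measure.ae_ne volume (0 : ℂ)] with u hu using hpointwise u hu

theorem integrableOn_inv_sub (hD : IsBounded D) (z : ℂ) :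
    IntegrableOn (fun ζ => (ζ - z)⁻¹) D :=
  integrableOn_comp_sub_of_isBounded locallyIntegrable_inv hD z

theorem tendstoUniformly_regularized_cauchyTransform (hD : IsBounded D) :
    TendstoUniformly (fun δ z => ∫ ζ in D, regularizedInv δ (ζ - z)) (cauchyTransform D)
      (𝓝[>] 0) := by
  refine Metric.tendstoUniformly_iff.mpr fun η hη => ?_
  filter_upwards [Ioc_mem_nhdsGT (zero_lt_one' ℝ),
    tendsto_integral_regularization_error.eventually_lt_const hη] with δ hδ hlt z
  have hreg : IntegrableOn (fun ζ => regularizedInv δ (ζ - z)) D :=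
    integrableOn_comp_sub_of_isBounded
      (continuous_regularizedInv hδ.1).locallyIntegrable hD z
  rw [dist_eq_norm, cauchyTransform, ← integral_sub (integrableOn_inv_sub hD z) hreg]
  calc ‖∫ ζ in D, ((ζ - z)⁻¹ - regularizedInv δ (ζ - z))‖
      ≤ ∫ ζ in D, δ / (‖ζ - z‖ * (‖ζ - z‖ ^ 2 + δ)) :=
        norm_integral_le_of_norm_le
          ((integrable_regularization_error hδ).comp_sub_right z).integrableOn
          (ae_of_all _ fun ζ => (norm_inv_sub_regularizedInv hδ.1 _).le)
    _ ≤ ∫ ζ, δ / (‖ζ - z‖ * (‖ζ - z‖ ^ 2 + δ)) :=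
        setIntegral_le_integral ((integrable_regularization_error hδ).comp_sub_right z)
          (ae_of_all _ fun ζ => have := hδ.1; by positivity)
    _ = ∫ u : ℂ, δ / (‖u‖ * (‖u‖ ^ 2 + δ)) :=
        integral_sub_right_eq_self (fun u : ℂ => δ / (‖u‖ * (‖u‖ ^ 2 + δ))) z
    _ < η := hlt

theorem continuous_log_norm_sq_add (hδ : 0 < δ) :
    Continuous fun u : ℂ => Real.log (‖u‖ ^ 2 + δ) / 2 :=
  continuous_iff_continuousAt.mpr fun u => (hasFDerivAt_log_norm_sq_add hδ u).continuousAt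

theorem hasFDerivAt_regularized_logPotential (hD : IsBounded D) (hδ : 0 < δ) (z : ℂ) :
    HasFDerivAt (fun z => ∫ ζ in D, Real.log (‖ζ - z‖ ^ 2 + δ) / 2)
      (-reMul (∫ ζ in D, regularizedInv δ (ζ - z))) z := by
  have hlog := continuous_log_norm_sq_add hδ
  have hinv := continuous_regularizedInv hδ
  have hreg : IntegrableOn (fun ζ => regularizedInv δ (ζ - z)) D :=
    integrableOn_comp_sub_of_isBounded hinv.locallyIntegrable hD z
  rw [← ContinuousLinearMap.integral_comp_comm reMul hreg, ← integral_neg]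
  refine hasFDerivAt_integral_of_dominated_of_fderiv_le (bound := fun _ => ‖reMul‖ * (√δ)⁻¹)
    (F' := fun z ζ => -reMul (regularizedInv δ (ζ - z))) univ_mem
    (.of_forall fun z => (hlog.comp (continuous_sub_right z)).aestronglyMeasurable)
    (integrableOn_comp_sub_of_isBounded hlog.locallyIntegrable hD z)
    (by fun_prop) (ae_of_all _ fun ζ z _ => ?_) ?_ (ae_of_all _ fun ζ z _ => ?_)
  · rw [norm_neg]
    exact reMul.le_opNorm_of_le (norm_regularizedInv_le hδ _)
  · exact integrableOn_const hD.measure_lt_top.ne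
  · have hcomp := (hasFDerivAt_log_norm_sq_add hδ (ζ - z)).comp z
      ((hasFDerivAt_id z).const_sub ζ)
    rwa [ContinuousLinearMap.comp_neg, ContinuousLinearMap.comp_id] at hcomp

theorem abs_log_norm_sq_add_le (hδ : δ ∈ Set.Ioc 0 1) (hu : u ≠ 0) :
    |Real.log (‖u‖ ^ 2 + δ) / 2| ≤ |Real.log ‖u‖| + |Real.log (‖u‖ ^ 2 + 1) / 2| := by
  have hδ0 := hδ.1
  have hlower : Real.log ‖u‖ ≤ Real.log (‖u‖ ^ 2 + δ) / 2 := by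
    rw [le_div_iff₀ two_pos, mul_comm, ← Nat.cast_two, ← Real.log_pow]
    exact Real.log_le_log (by positivity) (by linarith)
  have hupper : Real.log (‖u‖ ^ 2 + δ) / 2 ≤ Real.log (‖u‖ ^ 2 + 1) / 2 := by
    gcongr
    exact hδ.2
  exact (abs_le_max_abs_abs hlower hupper).trans
    (max_le_add_of_nonneg (abs_nonneg _) (abs_nonneg _))

theorem tendsto_log_norm_sq_add (hu : u ≠ 0) :
    Tendsto (fun δ : ℝ => Real.log (‖u‖ ^ 2 + δ) / 2) (𝓝[>] 0) (𝓝 (Real.log ‖u‖)) := by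
  have hcont : ContinuousAt (fun δ : ℝ => Real.log (‖u‖ ^ 2 + δ) / 2) 0 := by
    have : ‖u‖ ^ 2 + 0 ≠ 0 := by simpa
    fun_prop (disch := assumption)
  have hlim := hcont.tendsto.mono_left (nhdsWithin_le_nhds (s := Set.Ioi 0))
  simpa using hlim

theorem integrableOn_log_norm_sub (hD : IsBounded D) (z : ℂ) :
    IntegrableOn (fun ζ => Real.log ‖ζ - z‖) D :=
  integrableOn_comp_sub_of_isBounded locallyIntegrable_log_norm hD z

theorem tendsto_regularized_logPotential (hD : IsBounded D) (z : ℂ) :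
    Tendsto (fun δ : ℝ => ∫ ζ in D, Real.log (‖ζ - z‖ ^ 2 + δ) / 2) (𝓝[>] 0)
      (𝓝 (logPotential D z)) := by
  have hne : ∀ᵐ ζ ∂volume.restrict D, ζ - z ≠ 0 :=
    (Measure.ae_ne _ z).mono fun ζ => sub_ne_zero.mpr
  refine tendsto_integral_filter_of_dominated_convergence
    (fun ζ => |Real.log ‖ζ - z‖| + |Real.log (‖ζ - z‖ ^ 2 + 1) / 2|) ?_ ?_ ?_
    (hne.mono fun ζ => tendsto_log_norm_sq_add)
  · exact eventually_mem_nhdsWithin.mono fun δ hδ =>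
      ((continuous_log_norm_sq_add hδ).comp (continuous_sub_right z)).aestronglyMeasurable
  · filter_upwards [Ioc_mem_nhdsGT (zero_lt_one' ℝ)] with δ hδ
    exact hne.mono fun ζ => abs_log_norm_sq_add_le hδ
  · exact (integrableOn_log_norm_sub hD z).abs.add (integrableOn_comp_sub_of_isBounded
      (continuous_log_norm_sq_add one_pos).locallyIntegrable hD z).abs

theorem hasFDerivAt_logPotential (hD : IsBounded D) (z : ℂ) :
    HasFDerivAt (logPotential D) (-reMul (cauchyTransform D z)) z := by
  have hunif : TendstoUniformly (fun (δ : ℝ) z => -reMul (∫ ζ in D, regularizedInv δ (ζ - z)))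
      (fun z => -reMul (cauchyTransform D z)) (𝓝[>] 0) :=
    (-reMul).uniformContinuous.comp_tendstoUniformly
      (tendstoUniformly_regularized_cauchyTransform hD)
  have hpos : ∀ᶠ p : ℝ × ℂ in 𝓝[>] 0 ×ˢ 𝓝 z, p.1 ∈ Set.Ioi 0 :=
    eventually_mem_nhdsWithin.prod_inl _
  exact hasFDerivAt_of_tendstoUniformlyOnFilter
    (hunif.tendstoUniformlyOnFilter.mono_right le_top)
    (hpos.mono fun p hp => hasFDerivAt_regularized_logPotential hD hp p.2)
    (.of_forall fun z => tendsto_regularized_logPotential hD z)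

/-- For `ζ = 0` the integrand on the left is `0`, since `z / 0 = 0`; this happens on a null set. -/
theorem setIntegral_log_norm_div_sub_one_inv (hD : IsBounded D) (z : ℂ) :
    ∫ ζ in D, Real.log ‖z / ζ - 1‖⁻¹ = logPotential D 0 - logPotential D z := by
  rw [logPotential, logPotential, ← integral_sub (integrableOn_log_norm_sub hD 0)
    (integrableOn_log_norm_sub hD z)]
  refine integral_congr_ae ?_
  filter_upwards [Measure.ae_ne _ 0, Measure.ae_ne _ z] with ζ hζ hζz
  have hdiv : z / ζ - 1 = -((ζ - z) / ζ) := by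
    field_simp
    ring
  rw [hdiv, norm_neg, Real.log_inv, norm_div, Real.log_div, sub_zero, neg_sub]
  exacts [norm_ne_zero_iff.mpr (sub_ne_zero.mpr hζz), norm_ne_zero_iff.mpr hζ]

end LogPotential

section ContourAtInfinity

variable {q p : ℂ → ℂ} {c : ℂ}

theorem circleIntegral_eq_circleIntegral_unit (q : ℂ → ℂ) (ρ : ℝ) :
    ∮ w in C(0, ρ), q w = ∮ w in C(0, 1), ρ * w * q (ρ * w) * w⁻¹ := by
  refine intervalIntegral.integral_congr fun θ _ => ?_
  have hne : exp (θ * I) ≠ 0 := exp_ne_zero _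
  simp only [deriv_circleMap, circleMap, smul_eq_mul, zero_add, ofReal_one, one_mul]
  field_simp

theorem circleIntegral_eq_of_one_le (hq : ∀ w ∈ closedExterior, DifferentiableAt ℂ q w) {ρ : ℝ}
    (hρ : 1 ≤ ρ) : ∮ w in C(0, ρ), q w = ∮ w in C(0, 1), q w :=
  circleIntegral_eq_of_differentiable_on_annulus_off_countable one_pos hρ Set.countable_empty
    (fun w hw => (hq w (by simpa using hw.2)).continuousAt.continuousWithinAt)
    fun w hw => hq w (le_of_lt (by simpa using hw.1.2))

theorem circleIntegral_eq_of_tendsto_mul (hq : ∀ w ∈ closedExterior, DifferentiableAt ℂ q w)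
    (hlim : Tendsto (fun w => w * q w) (cobounded ℂ) (𝓝 c)) :
    ∮ w in C(0, 1), q w = 2 * Real.pi * I * c := by
  have hscale : ∀ w ∈ Metric.sphere (0 : ℂ) 1,
      Tendsto (fun ρ : ℝ => ρ * w) atTop (cobounded ℂ) := fun w hw => by
    refine tendsto_norm_atTop_iff_cobounded.mp (tendsto_abs_atTop_atTop.congr fun ρ => ?_)
    simp [mem_sphere_zero_iff_norm.mp hw]
  obtain ⟨M, -, hM⟩ := hasBasis_cobounded_norm.eventually_iff.mp
    (hlim.norm.eventually_le_const (lt_add_one ‖c‖))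
  have htend : Tendsto (fun ρ : ℝ => ∮ w in C(0, 1), ρ * w * q (ρ * w) * w⁻¹) atTop
      (𝓝 (∮ w in C(0, 1), c * w⁻¹)) := by
    refine tendsto_circleIntegral_of_dominated (fun _ => ‖c‖ + 1) zero_le_one ?_ ?_
      continuousOn_const fun w hw => (hlim.comp (hscale w hw)).mul_const _
    · filter_upwards [eventually_ge_atTop 1] with ρ hρ w hw
      have hw1 : ‖w‖ = 1 := mem_sphere_zero_iff_norm.mp hw
      have hw0 : w ≠ 0 := norm_ne_zero_iff.mp (by simp [hw1])
      have hqw : ContinuousAt q (ρ * w) := (hq _ (by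
        simpa [hw1, abs_of_nonneg (zero_le_one.trans hρ)] using hρ)).continuousAt
      have hmul : ContinuousAt (fun w : ℂ => ρ * w) w := by fun_prop
      exact ((hmul.mul (hqw.comp hmul)).mul (continuousAt_inv₀ hw0)).continuousWithinAt
    · filter_upwards [eventually_ge_atTop M, eventually_ge_atTop 0] with ρ hρ hρ0 w hw
      have hw1 : ‖w‖ = 1 := mem_sphere_zero_iff_norm.mp hw
      simpa [hw1] using hM (x := ρ * w) (by simpa [hw1, abs_of_nonneg hρ0] using hρ)
  have hconst : ∮ w in C(0, 1), c * w⁻¹ = 2 * Real.pi * I * c := by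
    have hinv := circleIntegral.integral_sub_center_inv (0 : ℂ) (one_ne_zero (α := ℝ))
    simp only [sub_zero] at hinv
    rw [circleIntegral.integral_const_mul, hinv, mul_comm]
  rw [hconst] at htend
  refine tendsto_nhds_unique (tendsto_const_nhds.congr' ?_) htend
  filter_upwards [eventually_ge_atTop 1] with ρ hρ
  rw [← circleIntegral_eq_circleIntegral_unit, circleIntegral_eq_of_one_le hq hρ]

theorem differentiableAt_dslope {f : ℂ → ℂ} {a b : ℂ} (ha : ∀ᶠ w in 𝓝 a, DifferentiableAt ℂ f w)
    (hb : DifferentiableAt ℂ f b) : DifferentiableAt ℂ (dslope f a) b := by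
  rcases eq_or_ne b a with rfl | hne
  · have hf : DifferentiableOn ℂ f {w | DifferentiableAt ℂ f w} := fun w hw =>
      DifferentiableAt.differentiableWithinAt hw
    exact ((differentiableOn_dslope ha).mpr hf).differentiableAt ha
  · exact (differentiableAt_dslope_of_ne hne).mpr hb

theorem circleIntegral_inv_sub_of_one_lt_norm {w₀ : ℂ} (hw₀ : 1 < ‖w₀‖) :
    ∮ w in C(0, 1), (w - w₀)⁻¹ = 0 := by
  have hne : ∀ w ∈ Metric.closedBall (0 : ℂ) 1, w - w₀ ≠ 0 := fun w hw => sub_ne_zero.mpr <| by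
    rintro rfl
    exact hw₀.not_ge (by simpa using hw)
  refine circleIntegral_eq_zero_of_differentiable_on_off_countable zero_le_one
    Set.countable_empty (ContinuousOn.inv₀ (by fun_prop) hne) fun w hw => ?_
  exact (differentiableAt_id.sub_const w₀).inv (hne w (Metric.ball_subset_closedBall hw.1))

theorem tendsto_div_sub_cobounded (w₀ : ℂ) :
    Tendsto (fun w => w / (w - w₀)) (cobounded ℂ) (𝓝 1) := by
  have hlim : Tendsto (fun w => 1 - w₀ * w⁻¹) (cobounded ℂ) (𝓝 1) := by
    simpa using (tendsto_inv₀_cobounded (α := ℂ)).const_mul w₀ |>.const_sub 1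
  have hinv := hlim.inv₀ one_ne_zero
  rw [inv_one] at hinv
  refine hinv.congr' ?_
  filter_upwards [eventually_ne_cobounded 0] with w hw
  rw [← inv_div, sub_div, div_self hw, div_eq_mul_inv]

theorem circleIntegral_div_sub_of_one_lt_norm
    (hp : ∀ w ∈ closedExterior, DifferentiableAt ℂ p w)
    (hlim : Tendsto p (cobounded ℂ) (𝓝 c)) {w₀ : ℂ} (hw₀ : 1 < ‖w₀‖) :
    ∮ w in C(0, 1), p w / (w - w₀) = 2 * Real.pi * I * (c - p w₀) := by
  have hnear : ∀ᶠ w in 𝓝 w₀, DifferentiableAt ℂ p w :=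
    ((isOpen_lt continuous_const continuous_norm).eventually_mem hw₀).mono
      fun w (hw : 1 < ‖w‖) => hp w hw.le
  have hdslope : ∀ w ∈ closedExterior, DifferentiableAt ℂ (dslope p w₀) w := fun w hw =>
    differentiableAt_dslope hnear (hp w hw)
  have hres : ∮ w in C(0, 1), dslope p w₀ w = 2 * Real.pi * I * (c - p w₀) := by
    refine circleIntegral_eq_of_tendsto_mul hdslope ?_
    have hmul := (tendsto_div_sub_cobounded w₀).mul (hlim.sub_const (p w₀))
    rw [one_mul] at hmul
    refine hmul.congr' ?_
    filter_upwards [eventually_ne_cobounded w₀] with w hw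
    rw [dslope_of_ne _ hw, slope_def_field, div_mul_eq_mul_div, mul_div_assoc]
  have hne : ∀ w ∈ Metric.sphere (0 : ℂ) 1, w ≠ w₀ := by
    rintro w hw rfl
    exact hw₀.ne' (mem_sphere_zero_iff_norm.mp hw)
  have hsplit : ∮ w in C(0, 1), p w / (w - w₀) =
      ∮ w in C(0, 1), (dslope p w₀ w + p w₀ * (w - w₀)⁻¹) :=
    circleIntegral.integral_congr zero_le_one fun w hw => by
      simp only [dslope_of_ne _ (hne w hw), slope_def_field]
      ring
  rw [hsplit, circleIntegral.integral_add, circleIntegral.integral_const_mul,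
    circleIntegral_inv_sub_of_one_lt_norm hw₀, hres, mul_zero, add_zero]
  · exact ContinuousOn.circleIntegrable zero_le_one fun w hw =>
      (hdslope w (mem_sphere_zero_iff_norm.mp hw).ge).continuousAt.continuousWithinAt
  · exact ContinuousOn.circleIntegrable zero_le_one (continuousOn_const.mul
      (ContinuousOn.inv₀ (by fun_prop) fun w hw => sub_ne_zero.mpr (hne w hw)))

theorem tendsto_deriv_of_tendsto_div (hq : ∀ w ∈ closedExterior, DifferentiableAt ℂ q w)
    (hlim : Tendsto (fun w => q w / w) (cobounded ℂ) (𝓝 c)) :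
    Tendsto (deriv q) (cobounded ℂ) (𝓝 c) := by
  refine Metric.tendsto_nhds.mpr fun ε hε => ?_
  have hclose := Metric.tendsto_nhds.mp hlim (ε / 4) (by positivity)
  obtain ⟨M, -, hM⟩ := hasBasis_cobounded_norm.eventually_iff.mp hclose
  filter_upwards [tendsto_norm_cobounded_atTop.eventually_ge_atTop (2 * max 1 M)] with w hw
  have hw1 : 2 ≤ ‖w‖ := by linarith [le_max_left 1 M]
  have hball : ∀ ζ ∈ Metric.closedBall w (‖w‖ / 2), max 1 M ≤ ‖ζ‖ := fun ζ hζ => by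
    have htri := norm_sub_norm_le w ζ
    rw [norm_sub_rev] at htri
    linarith [mem_closedBall_iff_norm.mp hζ]
  have hdiff : ∀ ζ ∈ Metric.closedBall w (‖w‖ / 2), DifferentiableAt ℂ q ζ := fun ζ hζ =>
    hq ζ ((le_max_left 1 M).trans (hball ζ hζ))
  have hbound : ∀ ζ ∈ Metric.sphere w (‖w‖ / 2), ‖q ζ - c * ζ‖ ≤ ε / 4 * (3 * ‖w‖ / 2) := by
    intro ζ hζ
    have hζM := hball ζ (Metric.sphere_subset_closedBall hζ)
    have hζ0 : ζ ≠ 0 := norm_pos_iff.mp (one_pos.trans_le ((le_max_left 1 M).trans hζM))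
    have hζw : ‖ζ‖ ≤ 3 * ‖w‖ / 2 := by
      linarith [norm_sub_norm_le ζ w, mem_sphere_iff_norm.mp hζ]
    have hdist := (hM ((le_max_right 1 M).trans hζM)).le
    rw [dist_eq_norm] at hdist
    calc ‖q ζ - c * ζ‖ = ‖q ζ / ζ - c‖ * ‖ζ‖ := by
          rw [← norm_mul, sub_mul, div_mul_cancel₀ _ hζ0]
      _ ≤ ε / 4 * (3 * ‖w‖ / 2) := by gcongr
  have hcauchy := norm_deriv_le_of_forall_mem_sphere_norm_le (by linarith : 0 < ‖w‖ / 2)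
    (DifferentiableOn.diffContOnCl_ball (fun ζ hζ => ((hdiff ζ hζ).sub
      (differentiableAt_id.const_mul c)).differentiableWithinAt) subset_rfl) hbound
  have hqw : DifferentiableAt ℂ q w := hdiff w (Metric.mem_closedBall_self (by linarith))
  have hderiv : deriv (fun ζ => q ζ - c * ζ) w = deriv q w - c := by
    simpa using (hqw.hasDerivAt.fun_sub ((hasDerivAt_id' w).const_mul c)).deriv
  calc dist (deriv q w) c = ‖deriv (fun ζ => q ζ - c * ζ) w‖ := by rw [hderiv, dist_eq_norm]
    _ ≤ ε / 4 * (3 * ‖w‖ / 2) / (‖w‖ / 2) := hcauchy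
    _ = 3 / 4 * ε := by field_simp
    _ < ε := by linarith

end ContourAtInfinity

section ExteriorMoments

theorem circleIntegral_div_sub_eq_sum {f g : ℂ → ℂ} {c z : ℂ} {R : ℝ} (hR : 0 ≤ R)
    (hf : ContinuousOn f (Metric.sphere c R)) (hg : ContinuousOn g (Metric.sphere c R))
    (hf0 : ∀ w ∈ Metric.sphere c R, f w ≠ 0) (hfz : ∀ w ∈ Metric.sphere c R, f w ≠ z) (m : ℕ) :
    ∮ w in C(c, R), g w / (f w - z) =
      (∑ k ∈ Finset.Icc 1 m, z ^ (k - 1) * ∮ w in C(c, R), g w * f w ^ (-(k : ℤ))) +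
        z ^ m * ∮ w in C(c, R), g w * f w ^ (-(m : ℤ)) / (f w - z) := by
  have hpow : ∀ k : ℤ, ContinuousOn (fun w => g w * f w ^ k) (Metric.sphere c R) := fun k =>
    hg.mul (hf.zpow₀ k fun w hw => .inl (hf0 w hw))
  have hdiv : ∀ k : ℤ, ContinuousOn (fun w => g w * f w ^ k / (f w - z)) (Metric.sphere c R) :=
    fun k => (hpow k).div (hf.sub continuousOn_const) fun w hw => sub_ne_zero.mpr (hfz w hw)
  induction m with
  | zero => simp
  | succ m ih =>
    have hstep : ∮ w in C(c, R), g w * f w ^ (-(m : ℤ)) / (f w - z) =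
        ∮ w in C(c, R), (g w * f w ^ (-((m + 1 : ℕ) : ℤ)) +
          z * (g w * f w ^ (-((m + 1 : ℕ) : ℤ)) / (f w - z))) :=
      circleIntegral.integral_congr hR fun w hw => by
        have hfw := hf0 w hw
        have hfzw := sub_ne_zero.mpr (hfz w hw)
        simp only [zpow_neg, zpow_natCast, pow_succ]
        field_simp
        ring
    have hint : CircleIntegrable
        (fun w => z * (g w * f w ^ (-((m + 1 : ℕ) : ℤ)) / (f w - z))) c R :=
      (continuousOn_const.mul (hdiv _)).circleIntegrable hR
    rw [ih, hstep, circleIntegral.integral_add ((hpow _).circleIntegrable hR) hint,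
      circleIntegral.integral_const_mul, Finset.sum_Icc_succ_top (by omega), Nat.add_sub_cancel]
    ring

/-- The exterior harmonic moment `t_k` of the curve parametrized by `h` on the unit circle. -/
noncomputable def exteriorMoment (h : ℂ → ℂ) (k : ℕ) : ℂ :=
  (2 * Real.pi * I * k)⁻¹ * ∮ w in C(0, 1), (starRingEnd ℂ) (h w) * h w ^ (-(k : ℤ)) * deriv h w

/-- The Schwarz function `S` of the curve parametrized by `h` on the unit circle, expressed in the
uniformizing coordinate: `schwarzParam h w = S (h w)`. -/
noncomputable def schwarzParam (h : ℂ → ℂ) (w : ℂ) : ℂ :=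
  (starRingEnd ℂ) (h ((starRingEnd ℂ) w)⁻¹)

/-- The derivative `∑_{k ≤ n} k t_k z^(k-1)` of the generating polynomial of the moments. -/
noncomputable def momentPolynomialDeriv (h : ℂ → ℂ) (n : ℕ) (z : ℂ) : ℂ :=
  ∑ k ∈ Finset.Icc 1 n, k * exteriorMoment h k * z ^ (k - 1)

variable {h G : ℂ → ℂ} {r c z w₀ : ℂ} {n : ℕ}

theorem schwarzParam_eq_conj {w : ℂ} (hw : w ∈ Metric.sphere 0 1) :
    schwarzParam h w = (starRingEnd ℂ) (h w) := by
  rw [schwarzParam, ← inv_eq_conj (mem_sphere_zero_iff_norm.mp hw), inv_inv]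

theorem natCast_mul_exteriorMoment {k : ℕ} (hk : k ≠ 0) :
    k * exteriorMoment h k = (2 * Real.pi * I)⁻¹ *
      ∮ w in C(0, 1), (starRingEnd ℂ) (h w) * h w ^ (-(k : ℤ)) * deriv h w := by
  have hk : (k : ℂ) ≠ 0 := Nat.cast_ne_zero.mpr hk
  rw [exteriorMoment, mul_inv_rev, ← mul_assoc, ← mul_assoc, mul_inv_cancel₀ hk, one_mul]

theorem ne_of_mem_interiorDomain (hz : z ∈ interiorDomain h) {w : ℂ} (hw : w ∈ closedExterior) :
    h w ≠ z := fun heq => hz ⟨w, hw, heq⟩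

namespace IsExteriorMap

theorem tendsto_deriv (H : IsExteriorMap h r) : Tendsto (deriv h) (cobounded ℂ) (𝓝 r) :=
  tendsto_deriv_of_tendsto_div (fun _ => H.differentiableAt) H.tendsto_div

theorem tendsto_sub_div (H : IsExteriorMap h r) (z : ℂ) :
    Tendsto (fun w => (h w - z) / w) (cobounded ℂ) (𝓝 r) := by
  simpa [sub_mul, div_eq_mul_inv] using
    H.tendsto_div.sub (tendsto_inv₀_cobounded.const_mul z)

theorem circleIntegral_mul_deriv_div_sub_of_mem_interiorDomain (H : IsExteriorMap h r)
    (hG : ∀ w ∈ closedExterior, DifferentiableAt ℂ G w) (hlim : Tendsto G (cobounded ℂ) (𝓝 c))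
    (hz : z ∈ interiorDomain h) :
    ∮ w in C(0, 1), G w * deriv h w / (h w - z) = 2 * Real.pi * I * c := by
  refine circleIntegral_eq_of_tendsto_mul (fun w hw => ((hG w hw).mul
    (H.differentiableAt_deriv hw)).div ((H.differentiableAt hw).sub_const z)
      (sub_ne_zero.mpr (ne_of_mem_interiorDomain hz hw))) ?_
  have hquot := (hlim.mul H.tendsto_deriv).div (H.tendsto_sub_div z) H.radius_ne_zero
  rw [mul_div_cancel_right₀ _ H.radius_ne_zero] at hquot
  refine hquot.congr fun w => ?_
  simp only [Pi.div_apply]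
  field_simp

theorem dslope_ne_zero (H : IsExteriorMap h r) (hw₀ : 1 < ‖w₀‖) {w : ℂ}
    (hw : w ∈ closedExterior) : dslope h w₀ w ≠ 0 := by
  rcases eq_or_ne w w₀ with rfl | hne
  · simpa using H.deriv_ne_zero w hw
  · rw [dslope_of_ne _ hne, slope_def_field]
    exact div_ne_zero (sub_ne_zero.mpr fun heq => hne (H.injOn hw hw₀.le heq))
      (sub_ne_zero.mpr hne)

theorem circleIntegral_mul_deriv_div_sub_image (H : IsExteriorMap h r)
    (hG : ∀ w ∈ closedExterior, DifferentiableAt ℂ G w) (hlim : Tendsto G (cobounded ℂ) (𝓝 c))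
    (hw₀ : 1 < ‖w₀‖) :
    ∮ w in C(0, 1), G w * deriv h w / (h w - h w₀) = 2 * Real.pi * I * (c - G w₀) := by
  have hnear : ∀ᶠ w in 𝓝 w₀, DifferentiableAt ℂ h w :=
    (H.analyticOnNhd w₀ hw₀.le).eventually_analyticAt.mono fun _ => AnalyticAt.differentiableAt
  have hdiff : ∀ w ∈ closedExterior,
      DifferentiableAt ℂ (fun w => G w * deriv h w / dslope h w₀ w) w := fun w hw =>
    ((hG w hw).mul (H.differentiableAt_deriv hw)).div
      (differentiableAt_dslope hnear (H.differentiableAt hw)) (H.dslope_ne_zero hw₀ hw)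
  have hdslope : Tendsto (dslope h w₀) (cobounded ℂ) (𝓝 r) := by
    have hmul := (tendsto_div_sub_cobounded w₀).mul (H.tendsto_sub_div (h w₀))
    rw [one_mul] at hmul
    refine hmul.congr' ?_
    filter_upwards [eventually_ne_cobounded 0, eventually_ne_cobounded w₀] with w hw0 hw
    rw [dslope_of_ne _ hw, slope_def_field, mul_comm, div_mul_div_cancel₀ hw0]
  have htend := (hlim.mul H.tendsto_deriv).div hdslope H.radius_ne_zero
  rw [mul_div_cancel_right₀ _ H.radius_ne_zero] at htend
  have hvalue : G w₀ * deriv h w₀ / dslope h w₀ w₀ = G w₀ := by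
    rw [dslope_same, mul_div_cancel_right₀ _ (H.deriv_ne_zero w₀ hw₀.le)]
  rw [← hvalue, ← circleIntegral_div_sub_of_one_lt_norm hdiff htend hw₀]
  refine circleIntegral.integral_congr zero_le_one fun w hw => ?_
  have hne : w ≠ w₀ := by
    rintro rfl
    exact hw₀.ne' (mem_sphere_zero_iff_norm.mp hw)
  simp only [dslope_of_ne _ hne, slope_def_field]
  rw [div_div, div_mul_cancel₀ _ (sub_ne_zero.mpr hne)]

theorem differentiableAt_mul_zpow_neg (H : IsExteriorMap h r) (h0 : 0 ∈ interiorDomain h) (n : ℕ)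
    {w : ℂ} (hG : DifferentiableAt ℂ G w) (hw : w ∈ closedExterior) :
    DifferentiableAt ℂ (fun w => G w * h w ^ (-(n : ℤ))) w :=
  hG.mul ((H.differentiableAt hw).zpow (.inl (ne_of_mem_interiorDomain h0 hw)))

theorem circleIntegral_conj_mul_deriv_div_sub (H : IsExteriorMap h r)
    (h0 : 0 ∈ interiorDomain h) (n : ℕ) (hz : z ∉ h '' Metric.sphere 0 1) :
    ∮ w in C(0, 1), (starRingEnd ℂ) (h w) * deriv h w / (h w - z) =
      2 * Real.pi * I * momentPolynomialDeriv h n z +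
        z ^ n * ∮ w in C(0, 1), schwarzParam h w * h w ^ (-(n : ℤ)) * deriv h w / (h w - z) := by
  have hconj : ContinuousOn (fun w => (starRingEnd ℂ) (h w) * deriv h w) (Metric.sphere 0 1) :=
    (continuous_conj.comp_continuousOn H.continuousOn_sphere).mul H.continuousOn_deriv_sphere
  have hmoment : ∀ k ∈ Finset.Icc 1 n,
      (z ^ (k - 1) * ∮ w in C(0, 1), (starRingEnd ℂ) (h w) * deriv h w * h w ^ (-(k : ℤ))) =
        2 * Real.pi * I * (k * exteriorMoment h k * z ^ (k - 1)) := fun k hk => by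
    rw [natCast_mul_exteriorMoment (Nat.one_le_iff_ne_zero.mp (Finset.mem_Icc.mp hk).1),
      mul_assoc _⁻¹, mul_inv_cancel_left₀ two_pi_I_ne_zero, mul_comm]
    simp only [mul_right_comm]
  have hschwarz :
      ∮ w in C(0, 1), (starRingEnd ℂ) (h w) * deriv h w * h w ^ (-(n : ℤ)) / (h w - z) =
        ∮ w in C(0, 1), schwarzParam h w * h w ^ (-(n : ℤ)) * deriv h w / (h w - z) :=
    circleIntegral.integral_congr zero_le_one fun w hw => by
      simp only [schwarzParam_eq_conj hw, mul_right_comm]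
  rw [circleIntegral_div_sub_eq_sum zero_le_one H.continuousOn_sphere hconj
    (fun w hw => ne_of_mem_interiorDomain h0 (mem_sphere_zero_iff_norm.mp hw).ge)
    (fun w hw heq => hz ⟨w, hw, heq⟩) n, Finset.sum_congr rfl hmoment, ← Finset.mul_sum,
    hschwarz, ← momentPolynomialDeriv]

theorem cauchyTransform_eq_momentPolynomialDeriv_add (H : IsExteriorMap h r)
    (h0 : 0 ∈ interiorDomain h) (n : ℕ) (hz : z ∉ h '' Metric.sphere 0 1) :
    cauchyTransform (interiorDomain h) z = Real.pi * momentPolynomialDeriv h n z +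
      (2 * I)⁻¹ *
        ((z ^ n * ∮ w in C(0, 1), schwarzParam h w * h w ^ (-(n : ℤ)) * deriv h w / (h w - z)) -
          (starRingEnd ℂ) z * ∮ w in C(0, 1), deriv h w / (h w - z)) := by
  have hne : ∀ w ∈ Metric.sphere (0 : ℂ) 1, h w - z ≠ 0 := fun w hw =>
    sub_ne_zero.mpr fun heq => hz ⟨w, hw, heq⟩
  have hquot : ContinuousOn (fun w => deriv h w / (h w - z)) (Metric.sphere 0 1) :=
    H.continuousOn_deriv_sphere.div (H.continuousOn_sphere.sub continuousOn_const) hne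
  have hsplit : ∮ w in C(0, 1), (starRingEnd ℂ) (h w - z) / (h w - z) * deriv h w =
      (∮ w in C(0, 1), (starRingEnd ℂ) (h w) * deriv h w / (h w - z)) -
        (starRingEnd ℂ) z * ∮ w in C(0, 1), deriv h w / (h w - z) := by
    simp only [mul_div_assoc, map_sub]
    rw [← circleIntegral.integral_const_mul, ← circleIntegral.integral_sub]
    · exact circleIntegral.integral_congr zero_le_one fun w _ => by ring
    · exact ((continuous_conj.comp_continuousOn H.continuousOn_sphere).mul
        hquot).circleIntegrable zero_le_one
    · exact (continuousOn_const.mul hquot).circleIntegrable zero_le_one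
  rw [H.cauchyTransform_interiorDomain, hsplit, H.circleIntegral_conj_mul_deriv_div_sub h0 n hz]
  field_simp
  ring

theorem cauchyTransform_of_mem_interiorDomain (H : IsExteriorMap h r)
    (h0 : 0 ∈ interiorDomain h) (hS : ∀ w ∈ closedExterior, DifferentiableAt ℂ (schwarzParam h) w)
    (hlim : Tendsto (fun w => schwarzParam h w * h w ^ (-(n : ℤ))) (cobounded ℂ) (𝓝 0))
    (hz : z ∈ interiorDomain h) :
    cauchyTransform (interiorDomain h) z =
      Real.pi * (momentPolynomialDeriv h n z - (starRingEnd ℂ) z) := by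
  have hz' : z ∉ h '' Metric.sphere 0 1 := fun ⟨w, hw, heq⟩ =>
    hz ⟨w, (mem_sphere_zero_iff_norm.mp hw).ge, heq⟩
  have hwinding := H.circleIntegral_mul_deriv_div_sub_of_mem_interiorDomain (G := fun _ => 1)
    (fun _ _ => differentiableAt_const _) tendsto_const_nhds hz
  have hschwarz := H.circleIntegral_mul_deriv_div_sub_of_mem_interiorDomain
    (fun w hw => H.differentiableAt_mul_zpow_neg h0 n (hS w hw) hw) hlim hz
  simp only [one_mul] at hwinding
  rw [H.cauchyTransform_eq_momentPolynomialDeriv_add h0 n hz', hwinding, hschwarz]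
  field_simp
  ring

theorem cauchyTransform_image (H : IsExteriorMap h r)
    (h0 : 0 ∈ interiorDomain h) (hS : ∀ w ∈ closedExterior, DifferentiableAt ℂ (schwarzParam h) w)
    (hlim : Tendsto (fun w => schwarzParam h w * h w ^ (-(n : ℤ))) (cobounded ℂ) (𝓝 0))
    (hw₀ : 1 < ‖w₀‖) :
    cauchyTransform (interiorDomain h) (h w₀) =
      Real.pi * (momentPolynomialDeriv h n (h w₀) - schwarzParam h w₀) := by
  have hz : h w₀ ∉ h '' Metric.sphere 0 1 := fun ⟨w, hw, heq⟩ => by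
    have hw1 : ‖w‖ = 1 := mem_sphere_zero_iff_norm.mp hw
    exact hw₀.ne' (H.injOn hw1.ge hw₀.le heq ▸ hw1)
  have hne : h w₀ ≠ 0 := ne_of_mem_interiorDomain h0 hw₀.le
  have hwinding := H.circleIntegral_mul_deriv_div_sub_image (G := fun _ => 1)
    (fun _ _ => differentiableAt_const _) tendsto_const_nhds hw₀
  have hschwarz := H.circleIntegral_mul_deriv_div_sub_image
    (fun w hw => H.differentiableAt_mul_zpow_neg h0 n (hS w hw) hw) hlim hw₀
  simp only [one_mul] at hwinding
  rw [H.cauchyTransform_eq_momentPolynomialDeriv_add h0 n hz, hwinding, hschwarz, zpow_neg,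
    zpow_natCast]
  field_simp
  ring

end IsExteriorMap

end ExteriorMoments

section EffectivePotential

variable {h : ℂ → ℂ} {r z w : ℂ} {n : ℕ}

/-- The generating polynomial `∑_{k ≤ n} t_k z^k` of the exterior harmonic moments. -/
noncomputable def momentPolynomial (h : ℂ → ℂ) (n : ℕ) (z : ℂ) : ℂ :=
  ∑ k ∈ Finset.Icc 1 n, exteriorMoment h k * z ^ k

/-- The normalized area `t₀` of the interior domain, whose area is `π t₀`. -/
noncomputable def normalizedArea (h : ℂ → ℂ) : ℝ := volume.real (interiorDomain h) / Real.pi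

/-- The effective potential `E = V + (2 / (π t₀)) ∫_D log |z/ζ - 1|⁻¹ dA(ζ)` of the interior domain
`D` of the curve, with external potential `V(z) = (|z|² - 2 Re ∑_{k ≤ n} t_k z^k) / t₀`. -/
noncomputable def effectivePotential (h : ℂ → ℂ) (n : ℕ) (z : ℂ) : ℝ :=
  1 / normalizedArea h * (‖z‖ ^ 2 - 2 * (momentPolynomial h n z).re) +
    2 / (Real.pi * normalizedArea h) * ∫ ζ in interiorDomain h, Real.log ‖z / ζ - 1‖⁻¹

theorem hasDerivAt_momentPolynomial (h : ℂ → ℂ) (n : ℕ) (z : ℂ) :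
    HasDerivAt (momentPolynomial h n) (momentPolynomialDeriv h n z) z := by
  refine (HasDerivAt.fun_sum fun k _ =>
    (hasDerivAt_pow k z).const_mul (exteriorMoment h k)).congr_deriv
      (Finset.sum_congr rfl fun k _ => ?_)
  ring

theorem momentPolynomial_zero (h : ℂ → ℂ) (n : ℕ) : momentPolynomial h n 0 = 0 :=
  Finset.sum_eq_zero fun k hk => by
    rw [zero_pow (Nat.one_le_iff_ne_zero.mp (Finset.mem_Icc.mp hk).1), mul_zero]

theorem hasFDerivAt_norm_sq_reMul (z : ℂ) :
    HasFDerivAt (fun z : ℂ => ‖z‖ ^ 2) (reMul (2 * (starRingEnd ℂ) z)) z := by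
  refine (hasStrictFDerivAt_norm_sq z).hasFDerivAt.congr_fderiv
    (ContinuousLinearMap.ext fun v => ?_)
  simp only [smul_apply, coe_innerSL_apply, Complex.inner, mul_re, conj_re, conj_im, mul_neg,
    sub_neg_eq_add, smul_add, nsmul_eq_mul, Nat.cast_ofNat, reMul_apply, re_ofNat, im_ofNat,
    zero_mul, neg_zero, sub_zero, mul_im, add_zero, neg_mul]
  ring

theorem hasFDerivAt_re_of_hasDerivAt {f : ℂ → ℂ} {f' : ℂ} (hf : HasDerivAt f f' z) :
    HasFDerivAt (fun z => (f z).re) (reMul f') z :=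
  (reCLM.hasFDerivAt.comp z (hf.hasFDerivAt.restrictScalars ℝ)).congr_fderiv
    (ContinuousLinearMap.ext fun v => by simp [mul_comm])

theorem wirtinger_reMul (c : ℂ) :
    (1 / 2 : ℂ) * ((reMul c 1 : ℝ) + I * (reMul c I : ℝ)) = (starRingEnd ℂ) c / 2 := by
  apply Complex.ext <;> simp <;> ring

namespace IsExteriorMap

theorem volume_real_interiorDomain (H : IsExteriorMap h r) :
    (volume.real (interiorDomain h) : ℂ) =
      (2 * I)⁻¹ * ∮ w in C(0, 1), (starRingEnd ℂ) (h w) * deriv h w := by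
  rw [← H.setIntegral_interiorDomain_dbar (F := starRingEnd ℂ) conjCLE.contDiff]
  simp [dbar_conj]

theorem eq_normalizedArea (H : IsExteriorMap h r) {t₀ : ℝ} (ht₀ : ((Real.pi * t₀ : ℝ) : ℂ) =
      (2 * I)⁻¹ * ∮ w in C(0, 1), (starRingEnd ℂ) (h w) * deriv h w) :
    t₀ = normalizedArea h := by
  rw [← H.volume_real_interiorDomain, ofReal_inj] at ht₀
  rw [normalizedArea, ← ht₀, mul_div_cancel_left₀ _ Real.pi_ne_zero]

theorem hasFDerivAt_effectivePotential (H : IsExteriorMap h r) (n : ℕ) (z : ℂ) :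
    HasFDerivAt (effectivePotential h n)
      (reMul (2 / normalizedArea h * ((starRingEnd ℂ) z - momentPolynomialDeriv h n z +
        cauchyTransform (interiorDomain h) z / Real.pi))) z := by
  have hlog := ((hasFDerivAt_logPotential H.isBounded_interiorDomain z).const_sub
    (logPotential (interiorDomain h) 0)).const_mul (2 / (Real.pi * normalizedArea h))
  have hpol := hasFDerivAt_re_of_hasDerivAt (hasDerivAt_momentPolynomial h n z)
  have hsum := (((hasFDerivAt_norm_sq_reMul z).fun_sub (hpol.const_mul 2)).const_mul
    (1 / normalizedArea h)).fun_add hlog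
  simp only [← setIntegral_log_norm_div_sub_one_inv H.isBounded_interiorDomain] at hsum
  refine hsum.congr_fderiv ?_
  have hsmul : ∀ (x : ℝ) (c : ℂ), x • reMul c = reMul (x * c) := fun x c => by
    rw [← real_smul, map_smul]
  rw [neg_neg, hsmul, hsmul, ← map_sub, hsmul, ← map_add]
  congr 1
  push_cast
  ring

theorem effectivePotential_eq_zero (H : IsExteriorMap h r) (h0 : 0 ∈ interiorDomain h)
    (hS : ∀ w ∈ closedExterior, DifferentiableAt ℂ (schwarzParam h) w)
    (hlim : Tendsto (fun w => schwarzParam h w * h w ^ (-(n : ℤ))) (cobounded ℂ) (𝓝 0))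
    (hz : z ∈ interiorDomain h) : effectivePotential h n z = 0 := by
  have hderiv : ∀ z ∈ interiorDomain h, HasFDerivAt (effectivePotential h n) 0 z := fun z hz => by
    have hE := H.hasFDerivAt_effectivePotential n z
    rwa [H.cauchyTransform_of_mem_interiorDomain h0 hS hlim hz,
      mul_div_cancel_left₀ _ (ofReal_ne_zero.mpr Real.pi_ne_zero), sub_add_sub_cancel, sub_self,
      mul_zero, map_zero] at hE
  calc effectivePotential h n z = effectivePotential h n 0 :=
        H.isOpen_interiorDomain.is_const_of_fderiv_eq_zero H.isPreconnected_interiorDomain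
          (fun z hz => (hderiv z hz).differentiableAt.differentiableWithinAt)
          (fun z hz => (hderiv z hz).fderiv) hz h0
    _ = 0 := by simp [effectivePotential, momentPolynomial_zero]

theorem wirtinger_effectivePotential (H : IsExteriorMap h r) (h0 : 0 ∈ interiorDomain h)
    (hS : ∀ w ∈ closedExterior, DifferentiableAt ℂ (schwarzParam h) w)
    (hlim : Tendsto (fun w => schwarzParam h w * h w ^ (-(n : ℤ))) (cobounded ℂ) (𝓝 0))
    (hw : 1 < ‖w‖) :
    (1 / 2 : ℂ) * ((fderiv ℝ (effectivePotential h n) (h w) 1 : ℝ) +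
        I * (fderiv ℝ (effectivePotential h n) (h w) I : ℝ)) =
      (h w - h (((starRingEnd ℂ) w)⁻¹)) / (normalizedArea h : ℂ) := by
  have hE := H.hasFDerivAt_effectivePotential n (h w)
  rw [H.cauchyTransform_image h0 hS hlim hw,
    mul_div_cancel_left₀ _ (ofReal_ne_zero.mpr Real.pi_ne_zero), sub_add_sub_cancel] at hE
  rw [hE.fderiv, wirtinger_reMul, schwarzParam]
  simp only [map_mul, map_div₀, map_sub, conj_conj, conj_ofReal, map_ofNat]
  ring

end IsExteriorMap

end EffectivePotential

section PolynomialCurve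

/-- The parametrization `w ↦ r w + ∑_{j < n} a_j w^(-j)` of a polynomial curve. -/
noncomputable def laurentParam {n : ℕ} (r : ℂ) (a : Fin n → ℂ) (w : ℂ) : ℂ :=
  r * w + ∑ j : Fin n, a j * w ^ (-(j : ℤ))

variable {n : ℕ} {r : ℂ} {a : Fin n → ℂ}

theorem analyticOnNhd_laurentParam (r : ℂ) (a : Fin n → ℂ) :
    AnalyticOnNhd ℂ (laurentParam r a) closedExterior := by
  have hdiff : DifferentiableOn ℂ (laurentParam r a) {0}ᶜ := fun w (hw : w ≠ 0) => by
    unfold laurentParam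
    exact DifferentiableAt.differentiableWithinAt (by fun_prop (disch := simp [hw]))
  exact (hdiff.analyticOnNhd isOpen_compl_singleton).mono fun w hw =>
    norm_pos_iff.mp (zero_lt_one.trans_le hw)

theorem tendsto_laurentParam_div (r : ℂ) (a : Fin n → ℂ) :
    Tendsto (fun w => laurentParam r a w / w) (cobounded ℂ) (𝓝 r) := by
  have hlim : Tendsto (fun w : ℂ => r + ∑ j : Fin n, a j * w⁻¹ ^ ((j : ℕ) + 1)) (cobounded ℂ)
      (𝓝 (r + ∑ j : Fin n, a j * 0 ^ ((j : ℕ) + 1))) :=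
    tendsto_const_nhds.add (tendsto_finsetSum _ fun j _ =>
      (tendsto_inv₀_cobounded.pow _).const_mul _)
  simp only [zero_pow (Nat.succ_ne_zero _), mul_zero, Finset.sum_const_zero, add_zero] at hlim
  refine hlim.congr' ?_
  filter_upwards [eventually_ne_cobounded 0] with w hw
  rw [laurentParam, add_div, mul_div_cancel_right₀ _ hw, Finset.sum_div]
  simp only [zpow_neg, zpow_natCast, inv_pow, pow_succ, div_eq_mul_inv, mul_assoc]

theorem schwarzParam_laurentParam (r : ℂ) (a : Fin n → ℂ) (w : ℂ) :
    schwarzParam (laurentParam r a) w =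
      (starRingEnd ℂ) r * w⁻¹ + ∑ j : Fin n, (starRingEnd ℂ) (a j) * w ^ (j : ℕ) := by
  simp [schwarzParam, laurentParam]

theorem differentiableAt_schwarzParam_laurentParam (r : ℂ) (a : Fin n → ℂ) {w : ℂ}
    (hw : w ∈ closedExterior) : DifferentiableAt ℂ (schwarzParam (laurentParam r a)) w := by
  have hw0 : w ≠ 0 := norm_pos_iff.mp (zero_lt_one.trans_le hw)
  rw [funext (schwarzParam_laurentParam r a)]
  fun_prop (disch := assumption)

theorem tendsto_schwarzParam_laurentParam_mul_inv_pow (r : ℂ) (a : Fin n → ℂ) :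
    Tendsto (fun w => schwarzParam (laurentParam r a) w * w⁻¹ ^ n) (cobounded ℂ) (𝓝 0) := by
  have hinv := tendsto_inv₀_cobounded (α := ℂ)
  have hlim : Tendsto (fun w : ℂ => (starRingEnd ℂ) r * w⁻¹ ^ (n + 1) +
      ∑ j : Fin n, (starRingEnd ℂ) (a j) * w⁻¹ ^ (n - j)) (cobounded ℂ)
      (𝓝 ((starRingEnd ℂ) r * 0 ^ (n + 1) +
        ∑ j : Fin n, (starRingEnd ℂ) (a j) * 0 ^ (n - (j : ℕ)))) :=
    ((hinv.pow _).const_mul _).add (tendsto_finsetSum _ fun j _ => (hinv.pow _).const_mul _)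
  simp only [zero_pow (Nat.succ_ne_zero _), zero_pow (Nat.sub_ne_zero_of_lt (Fin.is_lt _)),
    mul_zero, Finset.sum_const_zero, add_zero] at hlim
  refine hlim.congr' ?_
  filter_upwards [eventually_ne_cobounded 0] with w hw
  rw [schwarzParam_laurentParam, add_mul, Finset.sum_mul, mul_assoc, ← pow_succ']
  congr 1
  refine Finset.sum_congr rfl fun j _ => ?_
  rw [mul_assoc, pow_sub₀ _ (inv_ne_zero hw) j.is_lt.le, inv_pow w j, inv_inv, mul_comm (w ^ _)]

theorem tendsto_schwarzParam_laurentParam_mul_zpow (hr : r ≠ 0) (a : Fin n → ℂ) :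
    Tendsto (fun w => schwarzParam (laurentParam r a) w * laurentParam r a w ^ (-(n : ℤ)))
      (cobounded ℂ) (𝓝 0) := by
  have hlim := (tendsto_schwarzParam_laurentParam_mul_inv_pow r a).mul
    (((tendsto_laurentParam_div r a).inv₀ hr).pow n)
  rw [zero_mul] at hlim
  refine hlim.congr' ?_
  filter_upwards [eventually_ne_cobounded 0] with w hw
  rw [mul_assoc, ← mul_pow, zpow_neg, zpow_natCast, ← inv_pow, inv_div, inv_mul_eq_div,
    div_div_cancel_left' hw]

theorem isExteriorMap_laurentParam (hr : r ≠ 0)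
    (hinj : Set.InjOn (laurentParam r a) (Metric.sphere 0 1))
    (hderiv : ∀ w ∈ closedExterior, deriv (laurentParam r a) w ≠ 0)
    (hne : ∀ w ∈ closedExterior, laurentParam r a w ≠ 0) : IsExteriorMap (laurentParam r a) r :=
  isExteriorMap_of_injOn_sphere (analyticOnNhd_laurentParam r a) hderiv hinj
    ((Set.ne_univ_iff_exists_notMem _).mpr ⟨0, fun ⟨w, hw, hw0⟩ => hne w hw hw0⟩)
    (tendsto_laurentParam_div r a) hr

end PolynomialCurve

theorem stmt_16_general (n : ℕ) (r : ℂ) (t₀ : ℝ) (hr : r ≠ 0) (a : Fin n → ℂ)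
    (h : ℂ → ℂ)
    (hh : h = fun w : ℂ => r * w + ∑ j : Fin n, a j * w ^ (-(j : ℤ)))
    (hinj : Set.InjOn h (Metric.sphere (0 : ℂ) 1))
    (hderiv : ∀ w : ℂ, 1 ≤ ‖w‖ → deriv h w ≠ 0)
    (hne : ∀ w : ℂ, 1 ≤ ‖w‖ → h w ≠ 0)
    (Dp : Set ℂ) (hDpo : IsOpen Dp) (hDpb : IsBounded Dp)
    (h0 : (0 : ℂ) ∈ Dp) (hfr : frontier Dp = h '' Metric.sphere (0 : ℂ) 1)
    (t : ℕ → ℂ)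
    (ht : ∀ k ∈ Finset.Icc 1 n, t k = (2 * Real.pi * I * k)⁻¹ *
      ∮ w in C(0, 1), (starRingEnd ℂ) (h w) * (h w) ^ (-(k : ℤ)) * deriv h w)
    (harea : ((Real.pi * t₀ : ℝ) : ℂ) =
      (2 * I)⁻¹ * ∮ w in C(0, 1), (starRingEnd ℂ) (h w) * deriv h w)
    (V : ℂ → ℝ)
    (hV : ∀ z : ℂ, V z = (1 / t₀) *
      (‖z‖ ^ 2 - 2 * (∑ k ∈ Finset.Icc 1 n, t k * z ^ k).re))
    (E : ℂ → ℝ)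
    (hE : ∀ z : ℂ, E z = V z +
      (2 / (Real.pi * t₀)) * ∫ ζ in Dp, Real.log ‖z / ζ - 1‖⁻¹) :
    (∀ z ∈ Dp, E z = 0) ∧
    (∀ w : ℂ, 1 < ‖w‖ →
      (1 / 2 : ℂ) * (((fderiv ℝ E (h w)) 1 : ℝ) + I * ((fderiv ℝ E (h w)) I : ℝ)) =
        (h w - h (((starRingEnd ℂ) w)⁻¹)) / (t₀ : ℂ)) := by
  obtain rfl : h = laurentParam r a := hh
  have H := isExteriorMap_laurentParam hr hinj hderiv hne
  obtain rfl := H.eq_interiorDomain_of_frontier_eq hDpo hDpb ⟨0, h0⟩ hfr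
  obtain rfl := H.eq_normalizedArea harea
  have hmoment : ∀ z, ∑ k ∈ Finset.Icc 1 n, t k * z ^ k =
      momentPolynomial (laurentParam r a) n z := fun z =>
    Finset.sum_congr rfl fun k hk => by rw [ht k hk, exteriorMoment]
  obtain rfl : E = effectivePotential (laurentParam r a) n := funext fun z => by
    rw [hE, hV, hmoment, effectivePotential]
  have hS := fun w => differentiableAt_schwarzParam_laurentParam (w := w) r a
  have hlim := tendsto_schwarzParam_laurentParam_mul_zpow hr a
  exact ⟨fun z => H.effectivePotential_eq_zero h0 hS hlim,
    fun w => H.wirtinger_effectivePotential h0 hS hlim⟩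

/-- Let `γ` be the polynomial curve with exterior harmonic moments `(t_k)` and enclosed area
`πt₀`, interior domain `D₊`, parametrized by `h` (with critical radius bounded by `R < 1`),
and let `V(z) = (1/t₀)(|z|² − 2Re Σ_{k=1}^{d+1} t_k z^k)`.  Then the effective potential
`E(z) = V(z) + (2/(πt₀)) ∫_{D₊} log|z/ζ − 1|⁻¹ d²ζ` vanishes identically on `D₊`, and on
the exterior of `γ` (within the annular domain of the Schwarz reflection) its Wirtinger
derivative is `∂_{z̄} E(z) = (z − ρ(z))/t₀`, where `ρ` is the Schwarz reflection of `γ`;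
in the parametrization `z = h(w)` one has `ρ(h(w)) = h(1/w̄)`. -/
theorem stmt_16 (d : ℕ) (r R t₀ : ℝ) (hr : 0 < r) (ht₀ : 0 < t₀)
    (a : Fin (d + 1) → ℂ)
    (h : ℂ → ℂ)
    (hh : h = fun w : ℂ => (r : ℂ) * w + ∑ j : Fin (d + 1), a j * w ^ (-(j : ℤ)))
    (hinj : Set.InjOn h (Metric.sphere (0 : ℂ) 1))
    (hderiv : ∀ w : ℂ, 1 ≤ ‖w‖ → deriv h w ≠ 0)
    (hne : ∀ w : ℂ, 1 ≤ ‖w‖ → h w ≠ 0)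
    (hR0 : 0 ≤ R) (hR1 : R < 1)
    (hRcrit : ∀ w : ℂ, w ≠ 0 → deriv h w = 0 → ‖w‖ ≤ R)
    (Dp : Set ℂ) (hDpo : IsOpen Dp) (hDpb : Bornology.IsBounded Dp)
    (h0 : (0 : ℂ) ∈ Dp) (hfr : frontier Dp = h '' Metric.sphere (0 : ℂ) 1)
    (t : ℕ → ℂ)
    (ht : ∀ k ∈ Finset.Icc 1 (d + 1), t k = (2 * Real.pi * I * k)⁻¹ *
      ∮ w in C(0, 1), (starRingEnd ℂ) (h w) * (h w) ^ (-(k : ℤ)) * deriv h w)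
    (harea : ((Real.pi * t₀ : ℝ) : ℂ) =
      (2 * I)⁻¹ * ∮ w in C(0, 1), (starRingEnd ℂ) (h w) * deriv h w)
    (V : ℂ → ℝ)
    (hV : ∀ z : ℂ, V z = (1 / t₀) *
      (‖z‖ ^ 2 - 2 * (∑ k ∈ Finset.Icc 1 (d + 1), t k * z ^ k).re))
    (E : ℂ → ℝ)
    (hE : ∀ z : ℂ, E z = V z +
      (2 / (Real.pi * t₀)) * ∫ ζ in Dp, Real.log ‖z / ζ - 1‖⁻¹) :
    (∀ z ∈ Dp, E z = 0) ∧
    (∀ w : ℂ, 1 < ‖w‖ → ‖w‖ < R⁻¹ →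
      (1 / 2 : ℂ) * (((fderiv ℝ E (h w)) 1 : ℝ) + I * ((fderiv ℝ E (h w)) I : ℝ)) =
        (h w - h (((starRingEnd ℂ) w)⁻¹)) / (t₀ : ℂ)) :=
  (stmt_16_general (d + 1) r t₀ (ofReal_ne_zero.mpr hr.ne') a h hh hinj hderiv hne Dp hDpo hDpb h0
    hfr t ht harea V hV E hE).imp_right fun hext w hw _ => hext w hw
end
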